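/- arXiv:0711.2856 — 3 statements merged into one kernel-verified Lean document; each statement's English description precedes it below -/
import Mathlib

section
/- Let X be a Banach space and Y a closed subspace of X. If X = Y ⊕ Z and X = Y ⊕ W are both L-decompositions of X (i.e., Z and W are closed subspaces with X = Y + Z, Y ∩ Z = {0}, and ‖y + z‖ = ‖y‖ + ‖z‖ for all y ∈ Y, z ∈ Z, and similarly for W), then Z = W. That is, a subspace can have only one L-complement. -/
theorem L_complement_le {X : Type*} [NormedAddCommGroup X] [NormedSpace ℝ X]
    (Y Z W : Submodule ℝ X) (hYWsup : Y ⊔ W = ⊤)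
    (hZnorm : ∀ y ∈ Y, ∀ z ∈ Z, ‖y + z‖ = ‖y‖ + ‖z‖)
    (hWnorm : ∀ y ∈ Y, ∀ w ∈ W, ‖y + w‖ = ‖y‖ + ‖w‖) : Z ≤ W := by
  intro z hz
  have hzt : z ∈ Y ⊔ W := hYWsup ▸ Submodule.mem_top
  obtain ⟨y, hy, w, hw, rfl⟩ := Submodule.mem_sup.mp hzt
  have h1 := hWnorm y hy w hw
  have h2 := hZnorm (-y) (Y.neg_mem hy) (y + w) hz
  rw [neg_add_cancel_left, norm_neg] at h2
  have h3 : y = 0 := norm_le_zero_iff.mp (by linarith)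
  simpa [h3] using hw

/-- **Uniqueness of L-complements.**
Let `X` be a Banach space and `Y` a closed subspace of `X`.  If `X = Y ⊕ Z` and
`X = Y ⊕ W` are both L-decompositions of `X` (i.e. `Z`, `W` are closed subspaces with
`X = Y + Z`, `Y ∩ Z = {0}`, and `‖y + z‖ = ‖y‖ + ‖z‖` for all `y ∈ Y`, `z ∈ Z`,
and similarly for `W`), then `Z = W`. -/
theorem uniqueness_of_L_complement
    {X : Type*} [NormedAddCommGroup X] [NormedSpace ℝ X] [CompleteSpace X]
    (Y Z W : Submodule ℝ X)
    (hYc : IsClosed (Y : Set X)) (hZc : IsClosed (Z : Set X)) (hWc : IsClosed (W : Set X))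
    (hYZsup : Y ⊔ Z = ⊤) (hYZinf : Y ⊓ Z = ⊥)
    (hYWsup : Y ⊔ W = ⊤) (hYWinf : Y ⊓ W = ⊥)
    (hZnorm : ∀ y ∈ Y, ∀ z ∈ Z, ‖y + z‖ = ‖y‖ + ‖z‖)
    (hWnorm : ∀ y ∈ Y, ∀ w ∈ W, ‖y + w‖ = ‖y‖ + ‖w‖) :
    Z = W := by
  exact le_antisymm (L_complement_le Y Z W hYWsup hZnorm hWnorm)
    (L_complement_le Y W Z hYZsup hWnorm hZnorm)
end

section
/- Let A be a C*-algebra, I a closed two-sided ideal of A, and n ≥ 1 a natural number. If b ∈ A/I satisfies b^n = 0 and ‖b‖ ≤ 1 (in the quotient norm), then there exists a ∈ A with a + I = b, a^n = 0, and ‖a‖ ≤ 1. That is, every nilpotent contraction in a quotient C*-algebra lifts to a nilpotent contraction. -/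
namespace NilLift

universe u

/-- Approximate cut-off inside an ideal. -/
lemma exists_cut {A : Type u} [CStarAlgebra A] (I : Submodule ℂ A)
    (hI : ∀ a : A, ∀ x ∈ I, a * x ∈ I ∧ x * a ∈ I)
    (y : A) (hy : y ∈ I) (hys : IsSelfAdjoint y) (r : ℝ) (hr : 0 < r) :
    ∃ g ∈ I, IsSelfAdjoint g ∧ ‖1 - g‖ ≤ 1 ∧ ‖(1 - g) * y * (1 - g)‖ ≤ r := by
  have hpos : ∀ t : ℝ, r ^ 2 + t ^ 2 ≠ 0 := fun t => by positivity
  have hc1 : Continuous (fun t : ℝ => (r ^ 2 + t ^ 2)⁻¹) :=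
    Continuous.inv₀ (by fun_prop) hpos
  have hc2 : Continuous (fun t : ℝ => r ^ 2 * (r ^ 2 + t ^ 2)⁻¹) := by fun_prop
  set k := cfc (fun t : ℝ => r ^ 2 * (r ^ 2 + t ^ 2)⁻¹) y with hk
  have h1 : 1 - k = y * (y * cfc (fun t : ℝ => (r ^ 2 + t ^ 2)⁻¹) y) := by
    have e1 : (1 : A) = cfc (fun _ : ℝ => (1 : ℝ)) y := (cfc_const_one ℝ y).symm
    have e2 : y = cfc (fun t : ℝ => t) y := (cfc_id' ℝ y).symm
    rw [hk]
    conv_lhs => rw [e1]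
    rw [← cfc_sub (fun _ : ℝ => (1 : ℝ)) _ y (by fun_prop) (hc2.continuousOn)]
    conv_rhs => enter [1]; rw [e2]
    conv_rhs => enter [2, 1]; rw [e2]
    rw [← cfc_mul (fun t : ℝ => t) _ y (by fun_prop) hc1.continuousOn,
      ← cfc_mul (fun t : ℝ => t) _ y (by fun_prop) (by fun_prop)]
    congr 1
    funext t
    have := hpos t
    field_simp
    ring
  have hc3 : Continuous (fun t : ℝ => r ^ 2 * (r ^ 2 + t ^ 2)⁻¹ * t) := hc2.mul continuous_id
  have h2 : k * y * k = cfc (fun t : ℝ => (r ^ 2 * (r ^ 2 + t ^ 2)⁻¹) * t * (r ^ 2 * (r ^ 2 + t ^ 2)⁻¹)) y := by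
    rw [cfc_mul _ _ y hc3.continuousOn hc2.continuousOn,
      cfc_mul _ _ y hc2.continuousOn (by fun_prop),
      cfc_id' ℝ y]
  have hle : ∀ t : ℝ, |r ^ 2 * (r ^ 2 + t ^ 2)⁻¹| ≤ 1 := by
    intro t
    rw [abs_of_nonneg (by positivity), ← div_eq_mul_inv, div_le_one (by positivity)]
    nlinarith [sq_nonneg t]
  refine ⟨1 - k, ?_, ?_, ?_, ?_⟩
  · rw [h1]
    exact (hI (y * cfc (fun t : ℝ => (r ^ 2 + t ^ 2)⁻¹) y) y hy).2
  · exact (IsSelfAdjoint.one A).sub (cfc_predicate _ _)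
  · rw [sub_sub_cancel, hk]
    exact norm_cfc_le zero_le_one fun t _ => by simpa using hle t
  · rw [sub_sub_cancel, h2]
    refine norm_cfc_le hr.le fun t _ => ?_
    rw [Real.norm_eq_abs, abs_mul]
    have h3 : |r ^ 2 * (r ^ 2 + t ^ 2)⁻¹ * t| ≤ r := by
      rw [abs_mul, abs_of_nonneg (by positivity : 0 ≤ r ^ 2 * (r ^ 2 + t ^ 2)⁻¹),
        ← div_eq_mul_inv, div_mul_eq_mul_div, div_le_iff₀ (by positivity)]
      have : r * |t| ≤ r ^ 2 + t ^ 2 := by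
        nlinarith [sq_nonneg (r - |t|), sq_abs t, sq_nonneg r, sq_nonneg t]
      nlinarith
    calc _ ≤ r * 1 := mul_le_mul h3 (hle t) (abs_nonneg _) hr.le
      _ = r := mul_one r

lemma cut_norm {A : Type u} [CStarAlgebra A] (x g : A) (hg : IsSelfAdjoint g) :
    ‖x * (1 - g)‖ ^ 2 = ‖(1 - g) * (star x * x) * (1 - g)‖ := by
  rw [sq, ← CStarRing.norm_star_mul_self]
  congr 1
  rw [star_mul, star_sub, star_one, hg.star_eq]
  noncomm_ring

lemma ideal_star {A : Type u} [CStarAlgebra A] (I : Submodule ℂ A)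
    (hIc : IsClosed (I : Set A))
    (hI : ∀ a : A, ∀ x ∈ I, a * x ∈ I ∧ x * a ∈ I) (x : A) (hx : x ∈ I) : star x ∈ I := by
  have : star x ∈ closure (I : Set A) := by
    rw [Metric.mem_closure_iff]
    intro ε hε
    obtain ⟨g, hgI, hg, -, h⟩ := exists_cut I hI (star x * x) (hI _ _ hx).1
      (IsSelfAdjoint.star_mul_self x) (ε ^ 2 / 2) (by positivity)
    refine ⟨g * star x, (hI _ _ hgI).2, ?_⟩
    rw [← cut_norm x g hg] at h
    have e : dist (star x) (g * star x) = ‖x * (1 - g)‖ := by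
      rw [dist_eq_norm, ← norm_star (x * (1 - g)), star_mul, star_sub, star_one, hg.star_eq,
        sub_mul, one_mul]
    rw [e]
    refine lt_of_pow_lt_pow_left₀ 2 hε.le ?_
    have : 0 < ε ^ 2 := by positivity
    linarith
  rwa [hIc.closure_eq] at this

theorem exists_quot {A : Type u} [CStarAlgebra A] (I : Submodule ℂ A)
    (hIc : IsClosed (I : Set A))
    (hI : ∀ a : A, ∀ x ∈ I, a * x ∈ I ∧ x * a ∈ I) :
    ∃ (B : Type u) (_ : CStarAlgebra B) (φ : A →⋆ₐ[ℂ] B), Function.Surjective φ ∧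
      (∀ x, ‖φ x‖ = Metric.infDist x (I : Set A)) ∧ (∀ x, φ x = 0 ↔ x ∈ I) := by
  let J : Ideal A :=
    { carrier := I
      add_mem' := fun ha hb => I.add_mem ha hb
      zero_mem' := I.zero_mem
      smul_mem' := fun c x hx => (hI c x hx).1 }
  have hJ2 : J.IsTwoSided := ⟨fun {a} b ha => (hI b a ha).2⟩
  have hJc : IsClosed (J : Set A) := hIc
  have hJs : ∀ x ∈ J, star x ∈ J := fun x hx => ideal_star I hIc hI x hx
  let q : A → A ⧸ J := fun x => Ideal.Quotient.mk J x
  have hq : Function.Surjective q := Ideal.Quotient.mk_surjective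
  have hnorm : ∀ x, ‖q x‖ = Metric.infDist x (I : Set A) := fun x =>
    QuotientAddGroup.norm_mk (S := J.toAddSubgroup) x
  have hlift : ∀ (z : A ⧸ J) (r : ℝ), 0 < r → ∃ x, q x = z ∧ ‖x‖ < ‖z‖ + r := by
    intro z r hr
    exact QuotientAddGroup.exists_norm_mk_lt (S := J.toAddSubgroup) z (by linarith)
  have hqle : ∀ x, ‖q x‖ ≤ ‖x‖ := fun x => QuotientAddGroup.norm_mk_le_norm (S := J.toAddSubgroup)
  have hmulle : ∀ z w : A ⧸ J, ‖z * w‖ ≤ ‖z‖ * ‖w‖ := by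
    intro z w
    refine le_of_forall_pos_le_add fun ε hε => ?_
    have hcont : Filter.Tendsto (fun r : ℝ => (‖z‖ + r) * (‖w‖ + r)) (nhdsWithin 0 (Set.Ioi 0))
        (nhds (‖z‖ * ‖w‖)) := by
      have : Continuous (fun r : ℝ => (‖z‖ + r) * (‖w‖ + r)) := by fun_prop
      simpa using (this.tendsto 0).mono_left nhdsWithin_le_nhds
    have hev := (hcont.eventually (gt_mem_nhds (show ‖z‖ * ‖w‖ < ‖z‖ * ‖w‖ + ε by linarith))).and
      self_mem_nhdsWithin
    obtain ⟨r, hr, hr0⟩ := hev.exists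
    obtain ⟨x, rfl, hx⟩ := hlift z r hr0
    obtain ⟨y, rfl, hy⟩ := hlift w r hr0
    calc ‖q x * q y‖ = ‖q (x * y)‖ := by simp [q]
      _ ≤ ‖x * y‖ := hqle _
      _ ≤ ‖x‖ * ‖y‖ := norm_mul_le _ _
      _ ≤ (‖q x‖ + r) * (‖q y‖ + r) := by gcongr
      _ ≤ _ := hr.le
  let st : A ⧸ J → A ⧸ J := Quotient.map' (s₁ := J.quotientRel) (s₂ := J.quotientRel)
    (fun x => star x) (by
      intro x y h
      rw [Submodule.quotientRel_def] at h ⊢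
      rw [← star_sub]
      exact hJs _ h)
  have hst : ∀ x, st (q x) = q (star x) := fun x => rfl
  have hcstar : ∀ x, ‖q x‖ * ‖q x‖ ≤ ‖q (star x * x)‖ := by
    intro x
    refine le_of_forall_pos_le_add fun ε hε => ?_
    obtain ⟨v, hv, hvn⟩ := hlift (q (star x * x)) (ε / 2) (by positivity)
    have hv' : star x * x - v ∈ J := by
      have := (Ideal.Quotient.eq (I := J)).1 hv.symm
      exact this
    set y : A := ((1 : ℂ) / 2) • ((star x * x - v) + star (star x * x - v)) with hy
    have hyI : y ∈ I := I.smul_mem _ (I.add_mem hv' (hJs _ hv'))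
    have hys : IsSelfAdjoint y := by
      rw [hy, IsSelfAdjoint, star_smul, star_add, star_star, add_comm (star _)]
      congr 1
      simp
    have hyn : ‖star x * x - y‖ ≤ ‖q (star x * x)‖ + ε / 2 := by
      have e : star x * x - y = ((1 : ℂ) / 2) • (v + star v) := by
        rw [hy, star_sub, star_mul, star_star]
        module
      rw [e, norm_smul]
      have := norm_add_le v (star v)
      rw [norm_star] at this
      norm_num
      linarith
    obtain ⟨g, hgI, hg, hg1, h⟩ := exists_cut I hI y hyI hys (ε / 2) (by positivity)
    have e1 : q x = q (x * (1 - g)) := by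
      refine (Ideal.Quotient.eq (I := J)).2 ?_
      have : x - x * (1 - g) = x * g := by noncomm_ring
      rw [this]
      exact (hI _ _ hgI).1
    calc ‖q x‖ * ‖q x‖ = ‖q (x * (1 - g))‖ ^ 2 := by rw [← e1, sq]
      _ ≤ ‖x * (1 - g)‖ ^ 2 := by gcongr; exact hqle _
      _ = ‖(1 - g) * (star x * x) * (1 - g)‖ := cut_norm x g hg
      _ = ‖(1 - g) * (star x * x - y) * (1 - g) + (1 - g) * y * (1 - g)‖ := by
          congr 1; noncomm_ring
      _ ≤ ‖(1 - g) * (star x * x - y) * (1 - g)‖ + ε / 2 := (norm_add_le _ _).trans (by gcongr)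
      _ ≤ ‖1 - g‖ * ‖star x * x - y‖ * ‖1 - g‖ + ε / 2 := by
          gcongr; exact (norm_mul_le _ _).trans (by gcongr; exact norm_mul_le _ _)
      _ ≤ 1 * ‖star x * x - y‖ * 1 + ε / 2 := by gcongr
      _ ≤ _ := by linarith
  let i1 : NormedAddCommGroup (A ⧸ J) := Submodule.Quotient.normedAddCommGroup J
  let i2 : NormedRing (A ⧸ J) :=
    { i1, Ideal.Quotient.ring J with
      norm_mul_le := hmulle }
  let i3 : StarRing (A ⧸ J) :=
    { star := st
      star_involutive := by
        intro z
        obtain ⟨x, rfl⟩ := hq z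
        change st (st (q x)) = _
        rw [hst, hst, star_star]
      star_mul := by
        intro z w
        obtain ⟨x, rfl⟩ := hq z
        obtain ⟨y, rfl⟩ := hq w
        change st (q (x * y)) = st (q y) * st (q x)
        rw [hst, hst, hst, star_mul]
        rfl
      star_add := by
        intro z w
        obtain ⟨x, rfl⟩ := hq z
        obtain ⟨y, rfl⟩ := hq w
        change st (q (x + y)) = st (q x) + st (q y)
        rw [hst, hst, hst, star_add]
        rfl }
  let i4 : NormedAlgebra ℂ (A ⧸ J) :=
    { Submodule.Quotient.normedSpace J ℂ, Ideal.Quotient.algebra ℂ with }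
  let i5 : CStarAlgebra (A ⧸ J) :=
    { i2, i3, i4 with
      toCompleteSpace := inferInstance
      norm_mul_self_le := by
        intro z
        obtain ⟨x, rfl⟩ := hq z
        exact hcstar x
      star_smul := by
        intro c z
        obtain ⟨x, rfl⟩ := hq z
        change st (q (c • x)) = star c • st (q x)
        rw [hst, hst, star_smul]
        rfl }
  refine ⟨A ⧸ J, i5, ⟨Ideal.Quotient.mkₐ ℂ J, fun x => rfl⟩, hq, hnorm, fun x => ?_⟩
  exact Ideal.Quotient.eq_zero_iff_mem (I := J)

end NilLift


namespace NilLift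

universe u v

noncomputable def rr1 (t : ℝ) : ℝ := (max (1 / 2) (1 - t))⁻¹
noncomputable def rr2 (t : ℝ) : ℝ := (max (1 / 2) t)⁻¹

lemma rr1_cont : Continuous rr1 := by
  unfold rr1
  refine Continuous.inv₀ (by fun_prop) fun t => ?_
  have : (0 : ℝ) < max (1 / 2) (1 - t) := lt_max_of_lt_left (by norm_num)
  exact this.ne'

lemma rr2_cont : Continuous rr2 := by
  unfold rr2
  refine Continuous.inv₀ (by fun_prop) fun t => ?_
  have : (0 : ℝ) < max (1 / 2) t := lt_max_of_lt_left (by norm_num)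
  exact this.ne'

section

variable {A : Type u} [CStarAlgebra A] {B : Type v} [CStarAlgebra B]

lemma sah_cont (φ : A →⋆ₐ[ℂ] B) : Continuous φ :=
  AddMonoidHomClass.continuous_of_bound φ 1 fun x => by
    rw [one_mul]; exact NonUnitalStarAlgHom.norm_apply_le φ x

/-- the inner threshold function -/
noncomputable def G1 (Z : A) : A := 1 - (1 - Z) * cfc rr1 Z

/-- the outer threshold function -/
noncomputable def G2 (Z : A) : A := Z * cfc rr2 Z

lemma G1_eq (Z : A) (hZ : IsSelfAdjoint Z) :
    G1 Z = cfc (fun t : ℝ => 1 - (1 - t) * rr1 t) Z := by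
  have h := rr1_cont
  rw [cfc_sub (fun _ : ℝ => (1 : ℝ)) (fun t : ℝ => (1 - t) * rr1 t) Z (by fun_prop) (by fun_prop),
    cfc_mul (fun t : ℝ => 1 - t) rr1 Z (by fun_prop) (by fun_prop),
    cfc_sub (fun _ : ℝ => (1 : ℝ)) (fun t : ℝ => t) Z (by fun_prop) (by fun_prop),
    cfc_const_one ℝ Z, cfc_id' ℝ Z]
  rfl

lemma G2_eq (Z : A) (hZ : IsSelfAdjoint Z) :
    G2 Z = cfc (fun t : ℝ => t * rr2 t) Z := by
  have h := rr2_cont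
  rw [cfc_mul (fun t : ℝ => t) rr2 Z (by fun_prop) (by fun_prop), cfc_id' ℝ Z]
  rfl

lemma G2_mul_G1 (Z : A) (hZ : IsSelfAdjoint Z) : G2 Z * G1 Z = G1 Z := by
  have h1 := rr1_cont
  have h2 := rr2_cont
  rw [G1_eq Z hZ, G2_eq Z hZ, ← cfc_mul _ _ Z (by fun_prop) (by fun_prop)]
  congr 1
  funext t
  unfold rr1 rr2
  rcases le_total t (1 / 2) with ht | ht
  · rw [max_eq_right (by linarith : (1 : ℝ) / 2 ≤ 1 - t), max_eq_left ht,
      mul_inv_cancel₀ (by linarith : (1 : ℝ) - t ≠ 0)]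
    simp
  · rw [max_eq_right ht, mul_inv_cancel₀ (by linarith : t ≠ 0), one_mul]

lemma G1_sa (Z : A) (hZ : IsSelfAdjoint Z) : IsSelfAdjoint (G1 Z) := by
  rw [G1_eq Z hZ]; exact cfc_predicate _ _

lemma G2_sa (Z : A) (hZ : IsSelfAdjoint Z) : IsSelfAdjoint (G2 Z) := by
  rw [G2_eq Z hZ]; exact cfc_predicate _ _

lemma map_G1 (φ : A →⋆ₐ[ℂ] B) (Z : A) (hZ : IsSelfAdjoint Z) : φ (G1 Z) = G1 (φ Z) := by
  unfold G1
  rw [map_sub, map_mul, map_sub, map_one,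
    StarAlgHom.map_cfc (R := ℝ) φ rr1 Z (rr1_cont.continuousOn) (sah_cont φ) hZ (hZ.map φ)]

lemma map_G2 (φ : A →⋆ₐ[ℂ] B) (Z : A) (hZ : IsSelfAdjoint Z) : φ (G2 Z) = G2 (φ Z) := by
  unfold G2
  rw [map_mul,
    StarAlgHom.map_cfc (R := ℝ) φ rr2 Z (rr2_cont.continuousOn) (sah_cont φ) hZ (hZ.map φ)]

/-- the element to be split into positive and negative parts -/
noncomputable def WW (a : A) (m : ℕ) (E D : A) : A :=
  star (E * a) * (E * a) - (a ^ m * star (a ^ m) + (1 - D) * star (1 - D))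

lemma WW_sa (a : A) (m : ℕ) (E D : A) : IsSelfAdjoint (WW a m E D) :=
  (IsSelfAdjoint.star_mul_self _).sub
    ((IsSelfAdjoint.mul_star_self _).add (IsSelfAdjoint.mul_star_self _))

lemma map_WW (φ : A →⋆ₐ[ℂ] B) (a : A) (m : ℕ) (E D : A) :
    φ (WW a m E D) = WW (φ a) m (φ E) (φ D) := by
  simp [WW, map_star]

noncomputable def ZZ (H : A → A) (a : A) (m : ℕ) (E D : A) : A := D * H (WW a m E D) * D

/-- the chain of almost-units -/
noncomputable def chain (H : A → A) (a : A) (n : ℕ) : ℕ → A × A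
  | 0 => (1, 1)
  | k + 1 => (G2 (ZZ H a (n - (k + 1)) (chain H a n k).1 (chain H a n k).2),
      G1 (ZZ H a (n - (k + 1)) (chain H a n k).1 (chain H a n k).2))

noncomputable def FF (H : A → A) (a : A) (n : ℕ) : A :=
  ∑ k ∈ Finset.range (n - 1),
    ((chain H a n k).1 - (chain H a n (k + 1)).1) * a * (chain H a n (k + 1)).2

lemma ZZ_sa (H : A → A) (hH : ∀ w, IsSelfAdjoint w → IsSelfAdjoint (H w)) (a : A) (m : ℕ)
    (E D : A) (hD : IsSelfAdjoint D) : IsSelfAdjoint (ZZ H a m E D) := by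
  have h := hH _ (WW_sa a m E D)
  unfold ZZ
  rw [IsSelfAdjoint, star_mul, star_mul, h.star_eq, hD.star_eq, mul_assoc]

lemma chain_sa (H : A → A) (hH : ∀ w, IsSelfAdjoint w → IsSelfAdjoint (H w))
    (a : A) (n : ℕ) (k : ℕ) :
    IsSelfAdjoint (chain H a n k).1 ∧ IsSelfAdjoint (chain H a n k).2 := by
  induction k with
  | zero => exact ⟨IsSelfAdjoint.one A, IsSelfAdjoint.one A⟩
  | succ k ih =>
    exact ⟨G2_sa _ (ZZ_sa H hH _ _ _ _ ih.2), G1_sa _ (ZZ_sa H hH _ _ _ _ ih.2)⟩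

lemma chain_ED (H : A → A) (hH : ∀ w, IsSelfAdjoint w → IsSelfAdjoint (H w))
    (a : A) (n : ℕ) (k : ℕ) : (chain H a n k).1 * (chain H a n k).2 = (chain H a n k).2 := by
  cases k with
  | zero => simp [chain]
  | succ k => exact G2_mul_G1 _ (ZZ_sa H hH _ _ _ _ (chain_sa H hH a n k).2)

lemma chain_EE_succ (H : A → A) (hH : ∀ w, IsSelfAdjoint w → IsSelfAdjoint (H w))
    (a : A) (n : ℕ) (k : ℕ) :
    (chain H a n k).1 * (chain H a n (k + 1)).1 = (chain H a n (k + 1)).1 := by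
  change _ * G2 _ = G2 _
  unfold G2
  rw [← mul_assoc]
  congr 1
  unfold ZZ
  rw [← mul_assoc, ← mul_assoc, chain_ED H hH]

lemma chain_EE (H : A → A) (hH : ∀ w, IsSelfAdjoint w → IsSelfAdjoint (H w))
    (a : A) (n : ℕ) (j d : ℕ) :
    (chain H a n j).1 * (chain H a n (j + d + 1)).1 = (chain H a n (j + d + 1)).1 := by
  induction d with
  | zero => exact chain_EE_succ H hH a n j
  | succ d ih =>
    have h := chain_EE_succ H hH a n (j + d + 1)
    rw [show j + (d + 1) + 1 = j + d + 1 + 1 by ring, ← h, ← mul_assoc, ih]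

lemma chain_DE (H : A → A) (hH : ∀ w, IsSelfAdjoint w → IsSelfAdjoint (H w))
    (a : A) (n : ℕ) (j i : ℕ) (hji : j ≤ i) :
    (chain H a n i).2 * (chain H a n j).1 = (chain H a n i).2 := by
  have h : (chain H a n j).1 * (chain H a n i).2 = (chain H a n i).2 := by
    rcases hji.eq_or_lt with rfl | hlt
    · exact chain_ED H hH a n j
    · obtain ⟨d, rfl⟩ := Nat.exists_eq_add_of_lt hlt
      rw [← chain_ED H hH a n (j + d + 1), ← mul_assoc, chain_EE H hH a n j d]
  have h2 := congrArg star h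
  rwa [star_mul, (chain_sa H hH a n j).1.star_eq, (chain_sa H hH a n i).2.star_eq] at h2

lemma chain_D_pow (H : A → A) (hH : ∀ w, IsSelfAdjoint w → IsSelfAdjoint (H w))
    (a : A) (n : ℕ) (d : ℕ) : ∀ i, n ≤ i + d → 1 ≤ d →
    (chain H a n i).2 * FF H a n ^ d = 0 := by
  induction d with
  | zero => intro i _ h; omega
  | succ d ih =>
    intro i hi _
    rw [pow_succ', ← mul_assoc, FF, Finset.mul_sum, Finset.sum_mul]
    refine Finset.sum_eq_zero fun k hk => ?_
    rw [Finset.mem_range] at hk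
    change _ * _ * FF H a n ^ d = 0
    rcases lt_or_ge k i with hki | hki
    · rw [← mul_assoc, ← mul_assoc, mul_sub, chain_DE H hH a n k i hki.le,
        chain_DE H hH a n (k + 1) i hki, sub_self]
      simp
    · rw [mul_assoc, mul_assoc, ih (k + 1) (by omega) (by omega)]
      simp

lemma FF_pow (H : A → A) (hH : ∀ w, IsSelfAdjoint w → IsSelfAdjoint (H w))
    (a : A) (n : ℕ) (hn : 1 ≤ n) : FF H a n ^ n = 0 := by
  simpa [chain] using chain_D_pow H hH a n n 0 (by omega) hn

lemma map_chain (H : A → A) (hH : ∀ w, IsSelfAdjoint w → IsSelfAdjoint (H w))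
    (a : A) (n : ℕ) (φ : A →⋆ₐ[ℂ] B) (H' : B → B)
    (hφ : ∀ w, IsSelfAdjoint w → φ (H w) = H' (φ w)) (k : ℕ) :
    φ (chain H a n k).1 = (chain H' (φ a) n k).1 ∧
    φ (chain H a n k).2 = (chain H' (φ a) n k).2 := by
  induction k with
  | zero => simp [chain]
  | succ k ih =>
    have hZ := ZZ_sa H hH a (n - (k + 1)) (chain H a n k).1 _ (chain_sa H hH a n k).2
    have e : φ (ZZ H a (n - (k + 1)) (chain H a n k).1 (chain H a n k).2) =
        ZZ H' (φ a) (n - (k + 1)) (chain H' (φ a) n k).1 (chain H' (φ a) n k).2 := by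
      rw [ZZ, map_mul, map_mul, hφ _ (WW_sa _ _ _ _), map_WW, ih.1, ih.2, ZZ]
    simp only [chain]
    rw [map_G1 φ _ hZ, map_G2 φ _ hZ, e]
    exact ⟨rfl, rfl⟩

lemma map_FF (H : A → A) (hH : ∀ w, IsSelfAdjoint w → IsSelfAdjoint (H w))
    (a : A) (n : ℕ) (φ : A →⋆ₐ[ℂ] B) (H' : B → B)
    (hφ : ∀ w, IsSelfAdjoint w → φ (H w) = H' (φ w)) :
    φ (FF H a n) = FF H' (φ a) n := by
  simp only [FF, map_sum, map_mul, map_sub, (map_chain H hH a n φ H' hφ _).1,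
    (map_chain H hH a n φ H' hφ _).2]

end

section

variable {B : Type v} [CStarAlgebra B]

noncomputable def pp (w : B) : B := cfc (fun t : ℝ => max t 0) w
noncomputable def pn (w : B) : B := cfc (fun t : ℝ => max (-t) 0) w

lemma pp_pn (p q : B) (hpq : star p * p * (q) = 0) (hq : ∃ x y, q = x * star x + y * star y) :
    pp (star p * p - q) = star p * p ∧ pn (star p * p - q) = q := by
  let _ : PartialOrder B := CStarAlgebra.spectralOrder B
  have _ : StarOrderedRing B := CStarAlgebra.spectralOrderedRing B
  obtain ⟨x, y, hq⟩ := hq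
  have hq0 : 0 ≤ q := by
    rw [hq]; exact add_nonneg (mul_star_self_nonneg _) (mul_star_self_nonneg _)
  have h := CFC.posPart_negPart_unique (a := star p * p - q) rfl hpq (star_mul_self_nonneg p) hq0
  rw [CFC.posPart_def, CFC.negPart_def, cfcₙ_eq_cfc, cfcₙ_eq_cfc] at h
  exact h

lemma sum_sq_zero (x y : B) (h : x * star x + y * star y = 0) : x = 0 ∧ y = 0 := by
  let _ : PartialOrder B := CStarAlgebra.spectralOrder B
  have _ : StarOrderedRing B := CStarAlgebra.spectralOrderedRing B
  have h1 := (add_eq_zero_iff_of_nonneg (mul_star_self_nonneg x) (mul_star_self_nonneg y)).1 h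
  exact ⟨(CStarRing.mul_star_self_eq_zero_iff x).1 h1.1,
    (CStarRing.mul_star_self_eq_zero_iff y).1 h1.2⟩

lemma step_exact (a E D e : B) (m : ℕ) (hD : IsSelfAdjoint D) (he : IsSelfAdjoint e)
    (h1 : E * a ^ (m + 1) = 0) (h2 : E * a * D = E * a)
    (h3 : e * pn (WW a m E D) = 0) (h4 : pp (WW a m E D) * (1 - e) = 0) :
    E * a * G1 (D * e * D) = E * a ∧ G2 (D * e * D) * a ^ m = 0 := by
  have hc : star (E * a) * (E * a) * (a ^ m * star (a ^ m) + (1 - D) * star (1 - D)) = 0 := by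
    have e1 : E * a * (a ^ m * star (a ^ m)) = 0 := by
      rw [← mul_assoc, mul_assoc E, ← pow_succ', h1, zero_mul]
    have e2 : E * a * ((1 - D) * star (1 - D)) = 0 := by
      rw [← mul_assoc, mul_sub, h2, mul_one, sub_self, zero_mul]
    rw [mul_assoc, mul_add, e1, e2]; simp
  obtain ⟨hp, hq⟩ := pp_pn (E * a) _ hc ⟨_, _, rfl⟩
  rw [WW, hq] at h3
  rw [WW, hp] at h4
  have h5 := sum_sq_zero (e * a ^ m) (e * (1 - D)) (by
    have := congrArg (· * e) h3
    simp only [zero_mul] at this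
    rw [← this]
    simp only [star_mul, he.star_eq]
    noncomm_ring)
  have h6 : e * D = e := by
    have := h5.2
    rw [mul_sub, mul_one, sub_eq_zero] at this
    exact this.symm
  have h7 : D * e = e := by
    have := congrArg star h6
    rwa [star_mul, he.star_eq, hD.star_eq] at this
  rw [h7, h6]
  have h8 : E * a * (1 - e) = 0 := by
    rw [← CStarRing.star_mul_self_eq_zero_iff, star_mul, mul_assoc, ← mul_assoc _ (E * a), h4,
      mul_zero]
  constructor
  · rw [G1, mul_sub, ← mul_assoc, h8, zero_mul, sub_zero, mul_one]
  · have hcomm : e * cfc rr2 e = cfc rr2 e * e := by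
      have : Commute e (cfc rr2 e) := by
        conv_lhs => rw [← cfc_id' ℝ e]
        exact cfc_commute_cfc _ _ _
      exact this
    rw [G2, hcomm, mul_assoc, h5.1, mul_zero]

variable {A : Type u} [CStarAlgebra A]

/-- In a quotient where the splitting is exact, the construction does nothing to nilpotents. -/
lemma FF_exact (H : A → A) (hH : ∀ w, IsSelfAdjoint w → IsSelfAdjoint (H w)) (a : A) (n : ℕ)
    (hn : 1 ≤ n) (φ : A →⋆ₐ[ℂ] B)
    (h3 : ∀ w, IsSelfAdjoint w → φ (H w * pn w) = 0)
    (h4 : ∀ w, IsSelfAdjoint w → φ (pp w * (1 - H w)) = 0)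
    (hnil : φ a ^ n = 0) : φ (FF H a n) = φ a := by
  set E : ℕ → B := fun k => φ (chain H a n k).1 with hE
  set D : ℕ → B := fun k => φ (chain H a n k).2 with hD
  have hDs : ∀ k, IsSelfAdjoint (D k) := fun k => (chain_sa H hH a n k).2.map φ
  have key : ∀ k, E k * φ a ^ (n - (k + 1) + 1) = 0 → E k * φ a * D k = E k * φ a →
      E k * φ a * D (k + 1) = E k * φ a ∧ E (k + 1) * φ a ^ (n - (k + 1)) = 0 := by
    intro k g1 g2
    have hZ := ZZ_sa H hH a (n - (k + 1)) (chain H a n k).1 _ (chain_sa H hH a n k).2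
    have hW := WW_sa a (n - (k + 1)) (chain H a n k).1 (chain H a n k).2
    set w := WW a (n - (k + 1)) (chain H a n k).1 (chain H a n k).2 with hw
    have := step_exact (φ a) (E k) (D k) (φ (H w)) (n - (k + 1)) (hDs k) ((hH w hW).map φ) g1 g2
      (by
        have := h3 w hW
        rw [map_mul, pn, StarAlgHom.map_cfc (R := ℝ) φ _ w (by fun_prop) (sah_cont φ) hW
          (hW.map φ), hw, map_WW] at this
        exact this)
      (by
        have := h4 w hW
        rw [map_mul, pp, StarAlgHom.map_cfc (R := ℝ) φ _ w (by fun_prop) (sah_cont φ) hW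
          (hW.map φ), map_sub, map_one, hw, map_WW] at this
        exact this)
    have e : D k * φ (H w) * D k = φ (ZZ H a (n - (k + 1)) (chain H a n k).1 (chain H a n k).2) := by
      rw [ZZ, map_mul, map_mul]
    rw [e, ← map_G1 φ _ hZ, ← map_G2 φ _ hZ] at this
    exact this
  have hEE : ∀ k, E (k + 1) * E k = E (k + 1) := by
    intro k
    have := congrArg star (chain_EE_succ H hH a n k)
    rw [star_mul, (chain_sa H hH a n k).1.star_eq, (chain_sa H hH a n (k + 1)).1.star_eq] at this
    simp only [hE]
    rw [← map_mul, this]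
  have hE0 : E 0 = 1 := by simp [hE, chain]
  have hD0 : D 0 = 1 := by simp [hD, chain]
  have inv : ∀ k, k ≤ n → E k * φ a ^ (n - k) = 0 ∧ E k * φ a * D k = E k * φ a := by
    intro k
    induction k with
    | zero => intro _; simp [hE0, hD0, hnil]
    | succ k ih =>
      intro hk
      obtain ⟨i1, i2⟩ := ih (by omega)
      rw [show n - k = n - (k + 1) + 1 by omega] at i1
      obtain ⟨j1, j2⟩ := key k i1 i2
      refine ⟨j2, ?_⟩
      rw [← hEE k, mul_assoc (E (k + 1)), mul_assoc (E (k + 1)), j1]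
  have hterm : ∀ k ∈ Finset.range (n - 1), (E k - E (k + 1)) * φ a * D (k + 1) =
      E k * φ a - E (k + 1) * φ a := by
    intro k hk
    rw [Finset.mem_range] at hk
    obtain ⟨i1, i2⟩ := inv k (by omega)
    rw [show n - k = n - (k + 1) + 1 by omega] at i1
    rw [sub_mul, sub_mul, (key k i1 i2).1, (inv (k + 1) (by omega)).2]
  have hlast := (inv (n - 1) (by omega)).1
  rw [show n - (n - 1) = 1 by omega, pow_one] at hlast
  simp only [FF, map_sum, map_mul, map_sub]
  rw [Finset.sum_congr rfl hterm, Finset.sum_range_sub', hlast, hE0, one_mul, sub_zero]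

end

end NilLift



namespace NilLift

universe u v

section

open Filter Topology BoundedContinuousFunction

variable {A : Type u} [CStarAlgebra A] {B : Type v} [CStarAlgebra B]

noncomputable def hf (η : ℝ) (t : ℝ) : ℝ := max t 0 / (max t 0 + η)

lemma hf_cont {η : ℝ} (hη : 0 < η) : Continuous (hf η) := by
  unfold hf
  refine Continuous.div (by fun_prop) (by fun_prop) fun t => ?_
  have : 0 ≤ max t 0 := le_max_right _ _
  linarith

/-- approximate support projection of the positive part -/
noncomputable def Hc (η : ℝ) (w : A) : A := cfc (hf η) w

lemma Hc_sa (η : ℝ) (w : A) : IsSelfAdjoint (Hc η w) := cfc_predicate _ _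

lemma Hc_norm {η : ℝ} (hη : 0 < η) (w : A) : ‖Hc η w‖ ≤ 1 := by
  refine norm_cfc_le zero_le_one fun t _ => ?_
  have h : 0 ≤ max t 0 := le_max_right _ _
  unfold hf
  rw [Real.norm_of_nonneg (by positivity), div_le_one (by positivity)]
  linarith

lemma Hc_pn {η : ℝ} (hη : 0 < η) (w : A) : Hc η w * pn w = 0 := by
  have hc := hf_cont hη
  unfold Hc pn
  rw [← cfc_mul _ _ w (by fun_prop) (by fun_prop)]
  have : (fun t : ℝ => hf η t * max (-t) 0) = fun _ => 0 := by
    funext t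
    unfold hf
    rcases le_total t 0 with h | h
    · simp [max_eq_right h]
    · simp [max_eq_right (neg_nonpos.2 h)]
  rw [this, cfc_const_zero]

lemma Hc_pp {η : ℝ} (hη : 0 < η) (w : A) (hw : IsSelfAdjoint w) :
    ‖pp w * (1 - Hc η w)‖ ≤ η := by
  have hc := hf_cont hη
  unfold Hc pp
  rw [← cfc_const_one ℝ w, ← cfc_sub _ _ w (by fun_prop) (by fun_prop),
    ← cfc_mul _ _ w (by fun_prop) (by fun_prop)]
  refine norm_cfc_le hη.le fun t _ => ?_
  have h : 0 ≤ max t 0 := le_max_right _ _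
  have e : max t 0 * (1 - hf η t) = η * hf η t := by
    unfold hf; field_simp; ring
  have h1 : 0 ≤ hf η t := by unfold hf; positivity
  have h2 : hf η t ≤ 1 := by unfold hf; rw [div_le_one (by positivity)]; linarith
  change ‖max t 0 * (1 - hf η t)‖ ≤ η
  rw [e, Real.norm_of_nonneg (by positivity)]
  nlinarith

lemma map_Hc {η : ℝ} (hη : 0 < η) (φ : A →⋆ₐ[ℂ] B) (w : A) (hw : IsSelfAdjoint w) :
    φ (Hc η w) = Hc η (φ w) :=
  StarAlgHom.map_cfc (R := ℝ) φ _ w (hf_cont hη).continuousOn (sah_cont φ) hw (hw.map φ)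

lemma map_pp (φ : A →⋆ₐ[ℂ] B) (w : A) (hw : IsSelfAdjoint w) : φ (pp w) = pp (φ w) :=
  StarAlgHom.map_cfc (R := ℝ) φ _ w (by fun_prop) (sah_cont φ) hw (hw.map φ)

lemma map_pn (φ : A →⋆ₐ[ℂ] B) (w : A) (hw : IsSelfAdjoint w) : φ (pn w) = pn (φ w) :=
  StarAlgHom.map_cfc (R := ℝ) φ _ w (by fun_prop) (sah_cont φ) hw (hw.map φ)

/-- the null sequences -/
noncomputable def c00 (A : Type u) [CStarAlgebra A] : Submodule ℂ (ℕ →ᵇ A) where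
  carrier := {f | Tendsto f atTop (𝓝 0)}
  add_mem' := by
    intro f g hf hg
    have := Tendsto.add (show Tendsto f atTop (𝓝 0) from hf) hg
    rw [add_zero] at this
    exact this
  zero_mem' := by
    change Tendsto (fun _ => (0 : A)) atTop (𝓝 0)
    exact tendsto_const_nhds
  smul_mem' := by
    intro c f hf
    simpa using Tendsto.const_smul (show Tendsto f atTop (𝓝 0) from hf) c

lemma mem_c00 (f : ℕ →ᵇ A) : f ∈ c00 A ↔ Tendsto f atTop (𝓝 0) := Iff.rfl

lemma c00_closed : IsClosed (c00 A : Set (ℕ →ᵇ A)) := by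
  refine isClosed_of_closure_subset fun f hf => ?_
  rw [Metric.mem_closure_iff] at hf
  change Tendsto f atTop (𝓝 0)
  rw [Metric.tendsto_atTop]
  intro ε hε
  obtain ⟨g, hg, hfg⟩ := hf (ε / 2) (half_pos hε)
  obtain ⟨N, hN⟩ := Metric.tendsto_atTop.1 (show Tendsto g atTop (𝓝 0) from hg) _ (half_pos hε)
  refine ⟨N, fun i hi => ?_⟩
  have h1 := BoundedContinuousFunction.dist_coe_le_dist (f := f) (g := g) i
  have h2 := dist_triangle (f i) (g i) 0
  have h3 := hN i hi
  linarith

lemma c00_ideal (a : ℕ →ᵇ A) (x : ℕ →ᵇ A) (hx : x ∈ c00 A) : a * x ∈ c00 A ∧ x * a ∈ c00 A := by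
  have h0 : Tendsto (fun i => ‖a‖ * ‖x i‖) atTop (𝓝 0) := by
    have := ((tendsto_zero_iff_norm_tendsto_zero).1 ((mem_c00 x).1 hx)).const_mul ‖a‖
    simpa using this
  constructor
  · refine squeeze_zero_norm (fun i => ?_) h0
    rw [BoundedContinuousFunction.mul_apply]
    refine (norm_mul_le _ _).trans ?_
    gcongr
    exact a.norm_coe_le_norm i
  · refine squeeze_zero_norm (fun i => ?_) h0
    rw [BoundedContinuousFunction.mul_apply, mul_comm ‖a‖]
    refine (norm_mul_le _ _).trans ?_
    gcongr
    exact a.norm_coe_le_norm i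

/-- evaluation -/
noncomputable def evh (i : ℕ) : (ℕ →ᵇ A) →⋆ₐ[ℂ] A where
  toFun f := f i
  map_one' := rfl
  map_mul' _ _ := rfl
  map_zero' := rfl
  map_add' _ _ := rfl
  commutes' _ := rfl
  map_star' _ := rfl

lemma evh_apply (i : ℕ) (f : ℕ →ᵇ A) : evh i f = f i := rfl

lemma asym (n : ℕ) (hn : 1 ≤ n) (M : ℝ) (a : ℕ → A) (ha : ∀ i, ‖a i‖ ≤ M)
    (han : Tendsto (fun i => a i ^ n) atTop (𝓝 0)) (η : ℕ → ℝ) (hη : ∀ i, 0 < η i)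
    (hη0 : Tendsto η atTop (𝓝 0)) :
    Tendsto (fun i => FF (Hc (η i)) (a i) n - a i) atTop (𝓝 0) := by
  let â : ℕ →ᵇ A := BoundedContinuousFunction.ofNormedAddCommGroupDiscrete a M ha
  let Ĥ : (ℕ →ᵇ A) → (ℕ →ᵇ A) := fun w =>
    BoundedContinuousFunction.ofNormedAddCommGroupDiscrete (fun i => Hc (η i) (w i)) 1
      (fun i => Hc_norm (hη i) _)
  have hĤ : ∀ w i, Ĥ w i = Hc (η i) (w i) := fun _ _ => rfl
  have hsa : ∀ w, IsSelfAdjoint w → IsSelfAdjoint (Ĥ w) := by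
    intro w _
    ext i
    exact (Hc_sa (η i) (w i)).star_eq
  obtain ⟨Q, iQ, q, -, -, hq⟩ := exists_quot (c00 A) c00_closed c00_ideal
  have hpn : ∀ w : ℕ →ᵇ A, IsSelfAdjoint w → ∀ i, (pn w) i = pn (w i) := by
    intro w hw i
    exact map_pn (evh i) w hw
  have hpp : ∀ w : ℕ →ᵇ A, IsSelfAdjoint w → ∀ i, (pp w) i = pp (w i) := by
    intro w hw i
    exact map_pp (evh i) w hw
  have key := FF_exact Ĥ hsa â n hn q
    (by
      intro w hw
      rw [hq]
      have : Ĥ w * pn w = 0 := by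
        ext i
        rw [BoundedContinuousFunction.mul_apply, hĤ, hpn w hw, Hc_pn (hη i)]
        rfl
      rw [this]
      exact Submodule.zero_mem _)
    (by
      intro w hw
      rw [hq, mem_c00]
      refine squeeze_zero_norm (fun i => ?_) hη0
      rw [BoundedContinuousFunction.mul_apply, hpp w hw]
      exact Hc_pp (hη i) (w i) (hw.map (evh i)))
    (by
      rw [← map_pow, hq, mem_c00]
      exact han)
  rw [← sub_eq_zero, ← map_sub, hq, mem_c00] at key
  refine key.congr fun i => ?_
  have e := map_FF Ĥ hsa â n (evh i) (Hc (η i)) (fun _ _ => rfl)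
  change (FF Ĥ â n) i = FF (Hc (η i)) (a i) n at e
  rw [BoundedContinuousFunction.sub_apply, e]
  rfl

lemma asym_eps (A : Type u) [CStarAlgebra A] (n : ℕ) (hn : 1 ≤ n) (M ε : ℝ) (hε : 0 < ε) :
    ∃ δ > 0, ∀ a : A, ‖a‖ ≤ M → ‖a ^ n‖ ≤ δ → ∀ η : ℝ, 0 < η → η ≤ δ →
      ‖FF (Hc η) a n - a‖ ≤ ε := by
  by_contra hcon
  push Not at hcon
  have hpos : ∀ k : ℕ, (0 : ℝ) < 1 / ((k : ℝ) + 1) := fun k => Nat.one_div_pos_of_nat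
  choose a h1 h2 η h3 h4 h5 using fun k : ℕ => hcon (1 / ((k : ℝ) + 1)) (hpos k)
  have ht := tendsto_one_div_add_atTop_nhds_zero_nat (𝕜 := ℝ)
  have := asym n hn M a h1 (squeeze_zero_norm h2 ht) η h3
    (squeeze_zero (fun i => (h3 i).le) h4 ht)
  rw [tendsto_zero_iff_norm_tendsto_zero] at this
  obtain ⟨i, hi⟩ := (this.eventually (gt_mem_nhds hε)).exists
  exact absurd hi (not_lt.2 (h5 i).le)

end

end NilLift



namespace NilLift

universe u v

section

open Filter Topology

variable {A : Type u} [CStarAlgebra A] {B : Type v} [CStarAlgebra B]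

lemma pow_lip (A : Type u) [CStarAlgebra A] (R : ℝ) (n : ℕ) :
    ∃ K ≥ 0, ∃ C ≥ 0, (∀ x : A, ‖x‖ ≤ R → ‖x ^ n‖ ≤ K) ∧
      ∀ x y : A, ‖x‖ ≤ R → ‖y‖ ≤ R → ‖x ^ n - y ^ n‖ ≤ C * ‖x - y‖ := by
  induction n with
  | zero => exact ⟨‖(1 : A)‖, norm_nonneg _, 0, le_rfl, by simp, by simp⟩
  | succ n ih =>
    obtain ⟨K, hK, C, hC, h1, h2⟩ := ih
    refine ⟨K * |R|, by positivity, K + C * |R|, by positivity, ?_, ?_⟩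
    · intro x hx
      rw [pow_succ]
      refine (norm_mul_le _ _).trans ?_
      have := h1 x hx
      have := hx.trans (le_abs_self R)
      gcongr
    · intro x y hx hy
      have e : x ^ (n + 1) - y ^ (n + 1) = x ^ n * (x - y) + (x ^ n - y ^ n) * y := by
        rw [pow_succ, pow_succ]; noncomm_ring
      rw [e]
      have g1 := h1 x hx
      have g2 := h2 x y hx hy
      have g3 := hy.trans (le_abs_self R)
      have g4 : ‖x ^ n * (x - y)‖ ≤ K * ‖x - y‖ :=
        (norm_mul_le _ _).trans (by gcongr)
      have g5 : ‖(x ^ n - y ^ n) * y‖ ≤ C * ‖x - y‖ * |R| :=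
        (norm_mul_le _ _).trans (by gcongr)
      refine (norm_add_le _ _).trans ?_
      linarith

lemma step_lift (φ : A →⋆ₐ[ℂ] B) (hlift : ∀ z : B, ∀ r > 0, ∃ x, φ x = z ∧ ‖x‖ < ‖z‖ + r)
    (n : ℕ) (hn : 1 ≤ n) (M ε : ℝ) (hε : 0 < ε) :
    ∃ δ > 0, ∀ b : B, b ^ n = 0 → ∀ a : A, φ a = b → ‖a‖ ≤ M → ‖a ^ n‖ ≤ δ → ∀ γ > 0,
      ∃ a', φ a' = b ∧ ‖a' - a‖ ≤ ε ∧ ‖a' ^ n‖ ≤ γ := by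
  obtain ⟨δ, hδ, hA⟩ := asym_eps A n hn M (ε / 2) (half_pos hε)
  refine ⟨δ, hδ, fun b hb a hab haM han γ hγ => ?_⟩
  obtain ⟨-, -, C, hC, -, hlip⟩ := pow_lip A (M + ε) n
  set r := min (ε / 2) (γ / (C + 1)) with hr
  have hr0 : 0 < r := lt_min (half_pos hε) (by positivity)
  obtain ⟨δ', hδ', hB⟩ := asym_eps B n hn ‖b‖ (r / 2) (half_pos hr0)
  have hη : 0 < min δ δ' := lt_min hδ hδ'
  have g1 := hA a haM han _ hη (min_le_left _ _)
  have g2 := hB b le_rfl (by rw [hb, norm_zero]; exact hδ'.le) _ hη (min_le_right _ _)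
  have hsa : ∀ w : A, IsSelfAdjoint w → IsSelfAdjoint (Hc (min δ δ') w) := fun w _ => Hc_sa _ w
  have g3 := FF_pow (Hc (min δ δ')) hsa a n hn
  have g4 := map_FF (Hc (min δ δ')) hsa a n φ (Hc (min δ δ')) (map_Hc hη φ)
  rw [hab] at g4
  set T := FF (Hc (min δ δ')) a n
  obtain ⟨d, hd, hdn⟩ := hlift (b - φ T) (r / 2) (half_pos hr0)
  rw [g4, norm_sub_rev] at hdn
  have hd' : ‖d‖ ≤ r := by linarith
  have hrε : r ≤ ε / 2 := min_le_left _ _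
  have e1 : ‖T + d - a‖ ≤ ε := by
    rw [show T + d - a = (T - a) + d by abel]
    have := norm_add_le (T - a) d
    linarith
  have hT : ‖T‖ ≤ M + ε := by
    have := norm_add_le (T - a) a
    rw [sub_add_cancel] at this
    linarith
  have hTd : ‖T + d‖ ≤ M + ε := by
    have := norm_add_le (T + d - a) a
    rw [sub_add_cancel] at this
    linarith
  refine ⟨T + d, by rw [map_add, hd]; abel, e1, ?_⟩
  have := hlip _ _ hTd hT
  rw [g3, sub_zero, add_sub_cancel_left] at this
  calc _ ≤ C * ‖d‖ := this
    _ ≤ C * (γ / (C + 1)) := by gcongr; exact hd'.trans (min_le_right _ _)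
    _ ≤ (C + 1) * (γ / (C + 1)) := by gcongr; linarith
    _ = γ := by field_simp

lemma nil_lift (φ : A →⋆ₐ[ℂ] B) (hlift : ∀ z : B, ∀ r > 0, ∃ x, φ x = z ∧ ‖x‖ < ‖z‖ + r)
    (n : ℕ) (hn : 1 ≤ n) (b : B) (hb : b ^ n = 0) : ∃ a, φ a = b ∧ a ^ n = 0 := by
  choose δ hδ hstep using fun k : ℕ =>
    step_lift φ hlift n hn 3 ((1 / 2 : ℝ) ^ k) (by positivity)
  obtain ⟨c, hc, -⟩ := hlift b 1 one_pos
  set m := min 1 (δ 0) with hm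
  have hm0 : 0 < m := lt_min one_pos (hδ 0)
  set l : ℝ := m / (‖c‖ + 1) with hl
  have hl0 : 0 < l := by positivity
  set b' : B := (l : ℂ) • b with hb'
  have hb'n : b' ^ n = 0 := by rw [hb', smul_pow, hb, smul_zero]
  let P : ℕ → A → Prop := fun k x =>
    φ x = b' ∧ ‖x‖ ≤ 3 - 2 * (1 / 2 : ℝ) ^ k ∧ ‖x ^ n‖ ≤ δ k ∧ ‖x ^ n‖ ≤ (1 / 2 : ℝ) ^ k
  have h0 : P 0 ((l : ℂ) • c) := by
    have e1 : ‖(l : ℂ) • c‖ ≤ m := by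
      rw [norm_smul, Complex.norm_real, Real.norm_of_nonneg hl0.le, hl, div_mul_eq_mul_div,
        div_le_iff₀ (by positivity)]
      nlinarith [norm_nonneg c]
    have e2 : ‖((l : ℂ) • c) ^ n‖ ≤ m := by
      refine (norm_pow_le' _ (by omega)).trans ?_
      refine (pow_le_of_le_one (norm_nonneg _) (e1.trans (min_le_left _ _)) (by omega)).trans e1
    have m1 : m ≤ 1 := min_le_left _ _
    have m2 : m ≤ δ 0 := min_le_right _ _
    refine ⟨by rw [map_smul, hc], ?_, e2.trans m2, ?_⟩
    · rw [pow_zero]; linarith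
    · simpa using e2.trans m1
  have hs : ∀ k x, P k x → ∃ y, P (k + 1) y ∧ ‖y - x‖ ≤ (1 / 2 : ℝ) ^ k := by
    rintro k x ⟨p1, p2, p3, -⟩
    have hk : (0 : ℝ) < (1 / 2 : ℝ) ^ k := by positivity
    obtain ⟨y, y1, y2, y3⟩ := hstep k b' hb'n x p1 (by linarith) p3
      (min (δ (k + 1)) ((1 / 2 : ℝ) ^ (k + 1))) (lt_min (hδ _) (by positivity))
    refine ⟨y, ⟨y1, ?_, y3.trans (min_le_left _ _), y3.trans (min_le_right _ _)⟩, y2⟩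
    have := norm_add_le (y - x) x
    rw [sub_add_cancel] at this
    rw [pow_succ]
    linarith
  choose! nx hnx1 hnx2 using hs
  let s : ℕ → A := fun k => Nat.rec ((l : ℂ) • c) (fun k x => nx k x) k
  have hsP : ∀ k, P k (s k) := by
    intro k
    induction k with
    | zero => exact h0
    | succ k ih => exact hnx1 k _ ih
  have hcau : CauchySeq s := by
    refine cauchySeq_of_le_geometric (1 / 2) 1 (by norm_num) fun k => ?_
    rw [dist_comm, dist_eq_norm, one_mul]
    exact hnx2 k _ (hsP k)
  obtain ⟨x, hx⟩ := cauchySeq_tendsto_of_complete hcau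
  have hφx : φ x = b' := by
    refine tendsto_nhds_unique (((sah_cont φ).tendsto x).comp hx) ?_
    refine tendsto_const_nhds.congr fun k => ?_
    exact (hsP k).1.symm
  have hxn : x ^ n = 0 := by
    refine tendsto_nhds_unique (hx.pow n) ?_
    exact squeeze_zero_norm (fun k => (hsP k).2.2.2)
      (tendsto_pow_atTop_nhds_zero_of_lt_one (by norm_num) (by norm_num))
  refine ⟨(l : ℂ)⁻¹ • x, ?_, by rw [smul_pow, hxn, smul_zero]⟩
  rw [map_smul, hφx, hb', smul_smul, inv_mul_cancel₀ (by exact_mod_cast hl0.ne'), one_smul]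

lemma contract (φ : A →⋆ₐ[ℂ] B) (n : ℕ) (a : A) (han : a ^ n = 0) (hb : ‖φ a‖ ≤ 1) :
    ∃ a', φ a' = φ a ∧ a' ^ n = 0 ∧ ‖a'‖ ≤ 1 := by
  let _ : PartialOrder A := CStarAlgebra.spectralOrder A
  have _ : StarOrderedRing A := CStarAlgebra.spectralOrderedRing A
  let _ : PartialOrder B := CStarAlgebra.spectralOrder B
  have _ : StarOrderedRing B := CStarAlgebra.spectralOrderedRing B
  set w := star a * a - 1 with hw
  have hwsa : IsSelfAdjoint w := (IsSelfAdjoint.star_mul_self a).sub (IsSelfAdjoint.one A)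
  have hpp : 0 ≤ pp w := cfc_nonneg fun t _ => le_max_right _ _
  have hpn : 0 ≤ pn w := cfc_nonneg fun t _ => le_max_right _ _
  have hdiff : pp w - pn w = w := by
    unfold pp pn
    rw [← cfc_sub _ _ w (by fun_prop) (by fun_prop)]
    conv_rhs => rw [← cfc_id' ℝ w]
    congr 1
    funext t
    rcases le_total t 0 with h | h
    · simp [h]
    · simp [h]
  have hφY : φ (pp w) = 0 := by
    rw [map_pp φ w hwsa]
    have hle : φ w ≤ 0 := by
      rw [hw, map_sub, map_mul, map_star, map_one, sub_nonpos]
      rw [← CStarAlgebra.norm_le_one_iff_of_nonneg _ (star_mul_self_nonneg _),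
        CStarRing.norm_star_mul_self]
      nlinarith [norm_nonneg (φ a)]
    have := (CFC.posPart_eq_zero_iff (φ w) (hwsa.map φ)).2 hle
    rw [CFC.posPart_def, cfcₙ_eq_cfc] at this
    exact this
  set X := ∑ k ∈ Finset.range n, star (a ^ k) * pp w * a ^ k with hX
  have hX0 : 0 ≤ X := Finset.sum_nonneg fun k _ => star_left_conjugate_nonneg hpp _
  have hXd : X - star a * X * a = pp w := by
    have e : star a * X * a =
        ∑ k ∈ Finset.range n, star (a ^ (k + 1)) * pp w * a ^ (k + 1) := by
      rw [hX, Finset.mul_sum, Finset.sum_mul]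
      refine Finset.sum_congr rfl fun k _ => ?_
      rw [pow_succ, star_mul]
      simp only [mul_assoc]
    rw [e, hX, ← Finset.sum_sub_distrib,
      Finset.sum_range_sub' (fun k => star (a ^ k) * pp w * a ^ k), han]
    simp
  have hφX : φ X = 0 := by
    rw [hX, map_sum]
    refine Finset.sum_eq_zero fun k _ => ?_
    rw [map_mul, map_mul, hφY]; simp
  set P := 1 + X with hP
  have hPsa : IsSelfAdjoint P := (IsSelfAdjoint.one A).add (IsSelfAdjoint.of_nonneg hX0)
  have hφP : φ P = 1 := by rw [hP, map_add, hφX, map_one, add_zero]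
  have hPP : star a * P * a ≤ P := by
    rw [← sub_nonneg]
    have : P - star a * P * a = pn w := by
      have e1 : P - star a * P * a = 1 - star a * a + (X - star a * X * a) := by
        rw [hP]; noncomm_ring
      have e2 : pn w = pp w - w := (sub_eq_of_eq_add (sub_eq_iff_eq_add'.1 hdiff)).symm
      rw [e1, hXd, e2, hw]; abel
    rw [this]; exact hpn
  have hspec : ∀ t ∈ spectrum ℝ P, (1 : ℝ) ≤ t := by
    have h1 : algebraMap ℝ A 1 ≤ P := by
      rw [map_one, hP]; exact le_add_of_nonneg_right hX0
    exact (algebraMap_le_iff_le_spectrum (ha := hPsa)).1 h1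
  let f : ℝ → ℝ := fun t => Real.sqrt (max t 1)
  let g : ℝ → ℝ := fun t => (Real.sqrt (max t 1))⁻¹
  have hpos : ∀ t : ℝ, 0 < Real.sqrt (max t 1) := fun t =>
    Real.sqrt_pos.2 (lt_of_lt_of_le one_pos (le_max_right _ _))
  have hf : Continuous f := by fun_prop
  have hg : Continuous g := hf.inv₀ fun t => (hpos t).ne'
  set S := cfc f P with hS
  set T := cfc g P with hT
  have hTsa : IsSelfAdjoint T := cfc_predicate _ _
  have hSsa : IsSelfAdjoint S := cfc_predicate _ _
  have hST : S * T = 1 := by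
    rw [hS, hT, ← cfc_mul _ _ P (by fun_prop) (by fun_prop), ← cfc_const_one ℝ P]
    congr 1
    funext t
    exact mul_inv_cancel₀ (hpos t).ne'
  have hTS : T * S = 1 := by
    rw [hS, hT, ← cfc_mul _ _ P (by fun_prop) (by fun_prop), ← cfc_const_one ℝ P]
    congr 1
    funext t
    exact inv_mul_cancel₀ (hpos t).ne'
  have hSS : S * S = P := by
    rw [hS, ← cfc_mul _ _ P (by fun_prop) (by fun_prop)]
    conv_rhs => rw [← cfc_id' ℝ P]
    refine cfc_congr fun t ht => ?_
    change Real.sqrt (max t 1) * Real.sqrt (max t 1) = t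
    rw [Real.mul_self_sqrt (by positivity), max_eq_left (hspec t ht)]
  have hφS : φ S = 1 := by
    rw [hS, StarAlgHom.map_cfc (R := ℝ) φ f P (by fun_prop) (sah_cont φ) hPsa (hPsa.map φ), hφP,
      cfc_apply_one]
    simp [f]
  have hφT : φ T = 1 := by
    have := congrArg φ hST
    rwa [map_mul, hφS, one_mul, map_one] at this
  refine ⟨S * a * T, by rw [map_mul, map_mul, hφS, hφT, one_mul, mul_one], ?_, ?_⟩
  · have : ∀ k, (S * a * T) ^ k = S * a ^ k * T := by
      intro k
      induction k with
      | zero => simp [hST]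
      | succ k ih =>
        rw [pow_succ, ih, pow_succ]
        calc S * a ^ k * T * (S * a * T) = S * a ^ k * (T * S) * a * T := by noncomm_ring
          _ = _ := by rw [hTS]; noncomm_ring
    rw [this, han]; simp
  · have h1 : star (S * a * T) * (S * a * T) ≤ 1 := by
      calc star (S * a * T) * (S * a * T) = star T * (star a * P * a) * T := by
            rw [star_mul, star_mul, hSsa.star_eq, ← hSS]; noncomm_ring
        _ ≤ star T * P * T := star_left_conjugate_le_conjugate hPP T
        _ = (T * S) * (S * T) := by rw [hTsa.star_eq, ← hSS]; noncomm_ring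
        _ = 1 := by rw [hTS, hST, one_mul]
    rw [← CStarAlgebra.norm_le_one_iff_of_nonneg _ (star_mul_self_nonneg _),
        CStarRing.norm_star_mul_self] at h1
    nlinarith [norm_nonneg (S * a * T)]

end

end NilLift

theorem lift_nilpotent_contraction
    {A : Type*} [CStarAlgebra A]
    (I : Submodule ℂ A) (hIclosed : IsClosed (I : Set A))
    (hIideal : ∀ a : A, ∀ x ∈ I, a * x ∈ I ∧ x * a ∈ I)
    (n : ℕ) (hn : 1 ≤ n) (b : A)
    (hnil : b ^ n ∈ I) (hnorm : Metric.infDist b (I : Set A) ≤ 1) :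
    ∃ a : A, a - b ∈ I ∧ a ^ n = 0 ∧ ‖a‖ ≤ 1 := by
  obtain ⟨B, iB, φ, hsurj, hφn, hφ0⟩ := NilLift.exists_quot I hIclosed hIideal
  have hlift : ∀ z : B, ∀ r > 0, ∃ x, φ x = z ∧ ‖x‖ < ‖z‖ + r := by
    intro z r hr
    obtain ⟨y, rfl⟩ := hsurj z
    have h : Metric.infDist y (I : Set A) < ‖φ y‖ + r := by rw [hφn]; linarith
    obtain ⟨i, hi, hyi⟩ := (Metric.infDist_lt_iff ⟨0, I.zero_mem⟩).1 h
    refine ⟨y - i, ?_, by rwa [← dist_eq_norm]⟩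
    rw [map_sub, (hφ0 i).2 hi, sub_zero]
  obtain ⟨a, ha, han⟩ := NilLift.nil_lift φ hlift n hn (φ b)
    (by rw [← map_pow]; exact (hφ0 _).2 hnil)
  obtain ⟨a', h1, h2, h3⟩ := NilLift.contract φ n a han (by rw [ha, hφn]; exact hnorm)
  refine ⟨a', ?_, h2, h3⟩
  rw [← hφ0, map_sub, h1, ha, sub_self]
end

section
/- Let I be a C*-algebra, M(I) its multiplier algebra, and n ≥ 1 a natural number. If b is an element of the corona algebra M(I)/I with b^n = 0 and ‖b‖ ≤ 1, then there exists a ∈ M(I) with a + I = b, a^n = 0, and ‖a‖ ≤ 1. -/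
open MultiplierAlgebra

namespace LiftNil
open Filter Topology Polynomial


theorem cfc_poly_near {M : Type*} [CStarAlgebra M] (s : M) (hs : IsSelfAdjoint s)
    (R : ℝ) (hR : ‖s‖ ≤ R) (f : ℝ → ℝ) (hf : Continuous f) (p : ℝ[X]) (ε : ℝ) (hε : 0 ≤ ε)
    (hp : ∀ x ∈ Set.Icc (-R) R, |p.eval x - f x| < ε) :
    ‖cfc f s - aeval s p‖ ≤ ε := by
  rw [← cfc_polynomial p s hs, ← cfc_sub f p.eval s]
  refine norm_cfc_le hε ?_
  intro x hx
  have h1 : ‖x‖ ≤ ‖s‖ := by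
    rcases subsingleton_or_nontrivial M with h | h
    · simp [spectrum.of_subsingleton] at hx
    · exact spectrum.norm_le_norm_of_mem hx
  have := hp x (abs_le.mp (h1.trans hR))
  rw [Real.norm_eq_abs, abs_sub_comm]
  exact this.le

/-- functional calculus intertwining modulo a closed subspace. -/
theorem cfc_intertwine {M : Type*} [CStarAlgebra M] (J : Submodule ℂ M)
    (hJ : IsClosed (J : Set M)) (s t z : M) (hs : IsSelfAdjoint s) (ht : IsSelfAdjoint t)
    (hl : ∀ j ∈ J, s * j ∈ J) (hr : ∀ j ∈ J, j * t ∈ J) (h : s * z - z * t ∈ J)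
    (f : ℝ → ℝ) (hf : Continuous f) : cfc f s * z - z * cfc f t ∈ J := by
  have hpow : ∀ k : ℕ, s ^ k * z - z * t ^ k ∈ J := by
    intro k
    induction k with
    | zero => simp
    | succ k ih =>
      have e : s ^ (k+1) * z - z * t ^ (k+1) = s * (s ^ k * z - z * t ^ k) + (s * z - z * t) * t ^ k := by
        rw [pow_succ' s, pow_succ' t]; noncomm_ring
      rw [e]
      refine J.add_mem (hl _ ih) ?_
      clear e ih
      induction k with
      | zero => simpa using h
      | succ k ih => rw [pow_succ, ← mul_assoc]; exact hr _ ih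
  have hpoly : ∀ p : ℝ[X], aeval s p * z - z * aeval t p ∈ J := by
    intro p
    induction p using Polynomial.induction_on' with
    | add p q hp hq =>
      have e : aeval s (p+q) * z - z * aeval t (p+q) = (aeval s p * z - z * aeval t p) + (aeval s q * z - z * aeval t q) := by
        simp only [map_add]; noncomm_ring
      rw [e]; exact J.add_mem hp hq
    | monomial k r =>
      have e : aeval s (monomial k r) * z - z * aeval t (monomial k r) = (r : ℂ) • (s ^ k * z - z * t ^ k) := by
        simp [aeval_monomial, Algebra.algebraMap_eq_smul_one, smul_sub]
      rw [e]; exact J.smul_mem _ (hpow k)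
  have : cfc f s * z - z * cfc f t ∈ closure (J : Set M) := by
    rw [Metric.mem_closure_iff]
    intro ε hε
    set R := max ‖s‖ ‖t‖
    set δ := ε / (2 * ‖z‖ + 1) / 2 with hδ
    have hz := norm_nonneg z
    have hδ0 : 0 < δ := by positivity
    obtain ⟨p, hp⟩ := exists_polynomial_near_of_continuousOn (-R) R f hf.continuousOn δ hδ0
    refine ⟨_, hpoly p, ?_⟩
    have h1 := cfc_poly_near s hs R (le_max_left _ _) f hf p δ hδ0.le hp
    have h2 := cfc_poly_near t ht R (le_max_right _ _) f hf p δ hδ0.le hp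
    rw [dist_eq_norm]
    have e : cfc f s * z - z * cfc f t - (aeval s p * z - z * aeval t p) = (cfc f s - aeval s p) * z - z * (cfc f t - aeval t p) := by noncomm_ring
    rw [e]
    calc _ ≤ ‖(cfc f s - aeval s p) * z‖ + ‖z * (cfc f t - aeval t p)‖ := norm_sub_le _ _
      _ ≤ δ * ‖z‖ + ‖z‖ * δ := by
        gcongr
        · exact (norm_mul_le _ _).trans (by gcongr)
        · exact (norm_mul_le _ _).trans (by gcongr)
      _ = δ * (2 * ‖z‖) := by ring
      _ < δ * (2 * (2 * ‖z‖ + 1)) := by gcongr; linarith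
      _ = ε := by rw [hδ]; field_simp
  rwa [hJ.closure_eq] at this

/-- commutators with functional calculus. -/
theorem cfc_comm_small {M : Type*} [CStarAlgebra M] (f : ℝ → ℝ) (hf : Continuous f)
    (y : M) (ε : ℝ) (hε : 0 < ε) : ∃ δ > 0, ∀ d : M, IsSelfAdjoint d → ‖d‖ ≤ 1 →
      ‖d * y - y * d‖ < δ → ‖cfc f d * y - y * cfc f d‖ < ε := by
  have hpow : ∀ (k : ℕ) (d : M), ‖d‖ ≤ 1 → ‖d ^ k * y - y * d ^ k‖ ≤ k * ‖d * y - y * d‖ := by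
    intro k d hd
    induction k with
    | zero => simp
    | succ k ih =>
      have e : d ^ (k+1) * y - y * d ^ (k+1) = d * (d ^ k * y - y * d ^ k) + (d * y - y * d) * d ^ k := by
        rw [pow_succ' d]; noncomm_ring
      rw [e]
      have hdk : ‖(d * y - y * d) * d ^ k‖ ≤ ‖d * y - y * d‖ := by
        clear e ih
        induction k with
        | zero => simp
        | succ k ih =>
          rw [pow_succ, ← mul_assoc]
          refine (norm_mul_le _ _).trans ?_
          calc _ ≤ ‖(d * y - y * d) * d ^ k‖ * 1 := by gcongr
            _ ≤ _ := by simpa using ih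
      calc _ ≤ ‖d * (d ^ k * y - y * d ^ k)‖ + _ := norm_add_le _ _
        _ ≤ 1 * (k * ‖d * y - y * d‖) + ‖d * y - y * d‖ := by
          gcongr
          exact (norm_mul_le _ _).trans (by gcongr)
        _ = _ := by push_cast; ring
  have hpoly : ∀ p : ℝ[X], ∃ C ≥ 0, ∀ d : M, ‖d‖ ≤ 1 →
      ‖aeval d p * y - y * aeval d p‖ ≤ C * ‖d * y - y * d‖ := by
    intro p
    induction p using Polynomial.induction_on' with
    | add p q hp hq =>
      obtain ⟨C, hC, h⟩ := hp
      obtain ⟨D, hD, h'⟩ := hq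
      refine ⟨C + D, by positivity, fun d hd => ?_⟩
      have e : aeval d (p+q) * y - y * aeval d (p+q) = (aeval d p * y - y * aeval d p) + (aeval d q * y - y * aeval d q) := by
        simp only [map_add]; noncomm_ring
      rw [e, add_mul]
      exact (norm_add_le _ _).trans (add_le_add (h d hd) (h' d hd))
    | monomial k r =>
      refine ⟨|r| * k, by positivity, fun d hd => ?_⟩
      have e : aeval d (monomial k r) * y - y * aeval d (monomial k r) = r • (d ^ k * y - y * d ^ k) := by
        simp [aeval_monomial, Algebra.algebraMap_eq_smul_one, smul_sub]
      rw [e, norm_smul, mul_assoc]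
      exact mul_le_mul_of_nonneg_left (hpow k d hd) (norm_nonneg _)
  have hy := norm_nonneg y
  set η := ε / (2 * ‖y‖ + 1) / 2 with hη
  have hη0 : 0 < η := by positivity
  obtain ⟨p, hp⟩ := exists_polynomial_near_of_continuousOn (-1) 1 f hf.continuousOn η hη0
  obtain ⟨C, hC, h⟩ := hpoly p
  refine ⟨ε / 2 / (C + 1), by positivity, fun d hd hd1 hlt => ?_⟩
  have h1 := cfc_poly_near d hd 1 hd1 f hf p η hη0.le hp
  have e : cfc f d * y - y * cfc f d = ((cfc f d - aeval d p) * y - y * (cfc f d - aeval d p)) + (aeval d p * y - y * aeval d p) := by noncomm_ring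
  rw [e]
  have h2 : ‖(cfc f d - aeval d p) * y - y * (cfc f d - aeval d p)‖ < ε / 2 := by
    calc _ ≤ ‖(cfc f d - aeval d p) * y‖ + ‖y * (cfc f d - aeval d p)‖ := norm_sub_le _ _
      _ ≤ η * ‖y‖ + ‖y‖ * η := by
        gcongr
        · exact (norm_mul_le _ _).trans (by gcongr)
        · exact (norm_mul_le _ _).trans (by gcongr)
      _ = η * (2 * ‖y‖) := by ring
      _ < η * (2 * ‖y‖ + 1) := by gcongr; linarith
      _ = ε / 2 := by rw [hη]; field_simp
  have h3 : ‖aeval d p * y - y * aeval d p‖ ≤ ε / 2 := by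
    refine (h d hd1).trans ?_
    calc _ ≤ (C + 1) * (ε / 2 / (C + 1)) := by gcongr; linarith
      _ = _ := by field_simp
  linarith [norm_add_le ((cfc f d - aeval d p) * y - y * (cfc f d - aeval d p)) (aeval d p * y - y * aeval d p)]

end LiftNil

namespace LiftNil
open Filter Topology Polynomial


/-- A closed self-adjoint two-sided ideal with a good approximate unit. -/
structure IdealData {M : Type*} [CStarAlgebra M] [PartialOrder M] [StarOrderedRing M]
    (J : Submodule ℂ M) : Prop where
  closed : IsClosed (J : Set M)
  mul_left : ∀ (a : M), ∀ j ∈ J, a * j ∈ J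
  mul_right : ∀ (a : M), ∀ j ∈ J, j * a ∈ J
  star_mem : ∀ j ∈ J, star j ∈ J
  au : ∀ w ∈ J, 0 ≤ w → ‖w‖ < 1 → ∀ G : Finset M, (∀ g ∈ G, g ∈ J) → ∀ ε > 0,
    ∃ u ∈ J, w ≤ u ∧ ‖u‖ < 1 ∧ ∀ g ∈ G, ‖g - g * u‖ < ε

section
variable {M : Type*} [CStarAlgebra M] [PartialOrder M] [StarOrderedRing M]

theorem norm_sum_sq_le (N : ℕ) (T : ℕ → M) (a b : ℝ) (hb : 0 ≤ b) (h1 : ∀ i, ‖T i‖ ≤ a)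
    (h2 : ∀ i j, i < j → ‖star (T i) * T j‖ ≤ b) :
    ‖∑ i ∈ Finset.range N, T i‖ ^ 2 ≤ N * a ^ 2 + N ^ 2 * b := by
  have ha : 0 ≤ a := (norm_nonneg _).trans (h1 0)
  rw [sq, ← CStarRing.norm_star_mul_self, star_sum, Finset.sum_mul_sum]
  have key : ∀ i j, ‖star (T i) * T j‖ ≤ (if i = j then a ^ 2 else 0) + b := by
    intro i j
    rcases lt_trichotomy i j with h | h | h
    · rw [if_neg h.ne]; simpa using h2 i j h
    · subst h
      rw [if_pos rfl, CStarRing.norm_star_mul_self]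
      have := mul_self_le_mul_self (norm_nonneg _) (h1 i)
      nlinarith
    · rw [if_neg h.ne']
      have := h2 j i h
      rw [← norm_star, star_mul, star_star] at this
      simpa using this
  calc _ ≤ ∑ i ∈ Finset.range N, ∑ j ∈ Finset.range N, ((if i = j then a ^ 2 else 0) + b) := by
        refine (norm_sum_le _ _).trans (Finset.sum_le_sum fun i _ => ?_)
        refine (norm_sum_le _ _).trans (Finset.sum_le_sum fun j _ => key i j)
    _ ≤ ∑ i ∈ Finset.range N, (a ^ 2 + N * b) := by
        refine Finset.sum_le_sum fun i _ => ?_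
        rw [Finset.sum_add_distrib, Finset.sum_ite_eq]
        simp only [Finset.sum_const, Finset.card_range, nsmul_eq_mul]
        split_ifs
        · exact le_rfl
    _ = _ := by simp; ring

theorem IdealData.quasicentral {J : Submodule ℂ M} (D : IdealData J) (w : M) (hw : w ∈ J)
    (hw0 : 0 ≤ w) (hw1 : ‖w‖ < 1) (F G : Finset M) (hG : ∀ g ∈ G, g ∈ J) (ε : ℝ) (hε : 0 < ε) :
    ∃ u ∈ J, w ≤ u ∧ ‖u‖ < 1 ∧ (∀ y ∈ F, ‖u * y - y * u‖ < ε) ∧ ∀ g ∈ G, ‖g - g * u‖ < ε := by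
  classical
  set K : ℝ := 1 + ∑ y ∈ F, ‖y‖ with hK
  have hsum : 0 ≤ ∑ y ∈ F, ‖y‖ := Finset.sum_nonneg fun _ _ => norm_nonneg _
  have hK1 : 1 ≤ K := by linarith
  have hyK : ∀ y ∈ F, ‖y‖ ≤ K := fun y hy => by
    have := Finset.single_le_sum (f := fun y => ‖y‖) (fun _ _ => norm_nonneg _) hy
    linarith
  set η : ℝ := ε ^ 2 / (8 * K) with hη
  have hη0 : 0 < η := by positivity
  obtain ⟨u, hu, hr⟩ := exists_seq_of_forall_finset_exists
    (fun u : M => u ∈ J ∧ w ≤ u ∧ ‖u‖ < 1 ∧ ∀ g ∈ G, ‖g - g * u‖ < ε)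
    (fun u u' : M => ∀ y ∈ F, ‖star (u * y - y * u) - star (u * y - y * u) * u'‖ < η ∧
      ‖star (u * y - y * u) * y - star (u * y - y * u) * y * u'‖ < η) (by
      intro s hs
      obtain ⟨u', h1, h2, h3, h4⟩ := D.au w hw hw0 hw1
        (G ∪ ((s ×ˢ F).image (fun p => star (p.1 * p.2 - p.2 * p.1)) ∪
          (s ×ˢ F).image (fun p => star (p.1 * p.2 - p.2 * p.1) * p.2))) (by
          intro g hg
          simp only [Finset.mem_union, Finset.mem_image, Finset.mem_product] at hg
          have aux : ∀ p : M × M, p.1 ∈ s → star (p.1 * p.2 - p.2 * p.1) ∈ J := fun p hp =>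
            D.star_mem _ (J.sub_mem (D.mul_right _ _ (hs _ hp).1) (D.mul_left _ _ (hs _ hp).1))
          rcases hg with hg | ⟨p, hp, rfl⟩ | ⟨p, hp, rfl⟩
          · exact hG g hg
          · exact aux p hp.1
          · exact D.mul_right _ _ (aux p hp.1)) (min ε η) (lt_min hε hη0)
      refine ⟨u', ⟨h1, h2, h3, fun g hg => (h4 g (by simp [hg])).trans_le (min_le_left _ _)⟩, ?_⟩
      intro x hx y hy
      refine ⟨(h4 _ ?_).trans_le (min_le_right _ _), (h4 _ ?_).trans_le (min_le_right _ _)⟩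
      · simp only [Finset.mem_union, Finset.mem_image, Finset.mem_product]
        exact Or.inr (Or.inl ⟨(x, y), ⟨hx, hy⟩, rfl⟩)
      · simp only [Finset.mem_union, Finset.mem_image, Finset.mem_product]
        exact Or.inr (Or.inr ⟨(x, y), ⟨hx, hy⟩, rfl⟩))
  obtain ⟨N, hN⟩ := exists_nat_gt (8 * K ^ 2 / ε ^ 2)
  have hN0 : (0 : ℝ) < N := lt_of_le_of_lt (by positivity) hN
  have hNc : (N : ℂ) ≠ 0 := by exact_mod_cast hN0.ne'
  have hNpos : 0 < N := by exact_mod_cast hN0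
  set S := ∑ i ∈ Finset.range N, u i with hS
  set v : M := ((N : ℝ)⁻¹) • S with hv
  have hvnorm : ∀ z : ℕ → M, ∀ c : ℝ, (∀ i, ‖z i‖ < c) → ‖((N : ℝ)⁻¹) • ∑ i ∈ Finset.range N, z i‖ < c := by
    intro z c hz
    rw [norm_smul, norm_inv, Real.norm_natCast, inv_mul_lt_iff₀ hN0]
    refine (norm_sum_le _ _).trans_lt ?_
    calc _ < ∑ i ∈ Finset.range N, c := Finset.sum_lt_sum_of_nonempty (by simpa using hNpos.ne') fun i _ => hz i
      _ = _ := by simp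
  refine ⟨v, ?_, ?_, ?_, ?_, ?_⟩
  · have : v = ((N : ℂ)⁻¹) • S := by
      rw [hv]; simp [← Complex.coe_smul]
    rw [this]
    exact J.smul_mem _ (J.sum_mem fun i _ => (hu i).1)
  · have : w = ((N : ℝ)⁻¹) • ∑ i ∈ Finset.range N, w := by
      simp only [Finset.sum_const, Finset.card_range]
      rw [← Nat.cast_smul_eq_nsmul ℝ, smul_smul, inv_mul_cancel₀ hN0.ne', one_smul]
    rw [this]
    exact smul_le_smul_of_nonneg_left (Finset.sum_le_sum fun i _ => (hu i).2.1) (by positivity)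
  · exact hvnorm u 1 fun i => (hu i).2.2.1
  · intro y hy
    set T : ℕ → M := fun i => u i * y - y * u i with hT
    have e : v * y - y * v = ((N : ℝ)⁻¹) • ∑ i ∈ Finset.range N, T i := by
      rw [hv, hS, hT, Finset.sum_sub_distrib, smul_mul_assoc, mul_smul_comm, Finset.sum_mul,
        Finset.mul_sum, smul_sub]
    have hy' := hyK y hy
    have hT1 : ∀ i, ‖T i‖ ≤ 2 * K := by
      intro i
      have h1 := (hu i).2.2.1.le
      calc _ ≤ ‖u i * y‖ + ‖y * u i‖ := norm_sub_le _ _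
        _ ≤ 1 * K + K * 1 := by
          gcongr
          · exact (norm_mul_le _ _).trans (by gcongr)
          · exact (norm_mul_le _ _).trans (by gcongr)
        _ = _ := by ring
    have hT2 : ∀ i j, i < j → ‖star (T i) * T j‖ ≤ η * (2 * K) := by
      intro i j hij
      obtain ⟨h1, h2⟩ := hr i j hij y hy
      have e2 : star (T i) * T j = (star (T i) * y - star (T i) * y * u j) -
          (star (T i) - star (T i) * u j) * y := by
        simp only [hT]; noncomm_ring
      rw [e2]
      calc _ ≤ _ := norm_sub_le _ _
        _ ≤ η + η * K := by
          gcongr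
          exact (norm_mul_le _ _).trans (by gcongr)
        _ ≤ _ := by nlinarith
    have := norm_sum_sq_le N T (2 * K) (η * (2 * K)) (by positivity) hT1 hT2
    rw [e, norm_smul, norm_inv, Real.norm_natCast, inv_mul_lt_iff₀ hN0]
    refine lt_of_pow_lt_pow_left₀ 2 (by positivity) (this.trans_lt ?_)
    have h3 : η * (2 * K) = ε ^ 2 / 4 := by rw [hη]; field_simp; ring
    rw [h3]
    have h4 : 8 * K ^ 2 < N * ε ^ 2 := by rwa [div_lt_iff₀ (by positivity)] at hN
    have h5 : 0 < N * ε ^ 2 := by positivity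
    nlinarith
  · intro g hg
    have e : g - g * v = ((N : ℝ)⁻¹) • ∑ i ∈ Finset.range N, (g - g * u i) := by
      rw [Finset.sum_sub_distrib, smul_sub, ← Finset.mul_sum, hv, mul_smul_comm]
      congr 1
      simp only [Finset.sum_const, Finset.card_range]
      rw [← Nat.cast_smul_eq_nsmul ℝ, smul_smul, inv_mul_cancel₀ hN0.ne', one_smul]
    rw [e]
    exact hvnorm _ _ fun i => (hu i).2.2.2 g hg

/-- C*-property of ideals. -/
theorem IdealData.mem_of_mul_star {J : Submodule ℂ M} (D : IdealData J) (s : M)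
    (h : s * star s ∈ J) : s ∈ J := by
  have : s ∈ closure (J : Set M) := by
    rw [Metric.mem_closure_iff]
    intro ε hε
    set g := s * star s
    obtain ⟨u, hu, hu0, hu1, hg⟩ := D.au 0 J.zero_mem le_rfl (by simp) {g} (by simpa using h)
      (ε ^ 2 / 2) (by positivity)
    have hg := hg g (by simp)
    refine ⟨u * s, D.mul_right _ _ hu, ?_⟩
    rw [dist_eq_norm]
    have husa : star u = u := (IsSelfAdjoint.of_nonneg hu0).star_eq
    have e : (s - u * s) * star (s - u * s) = (g - g * u) - u * (g - g * u) := by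
      simp only [star_sub, star_mul, husa, g]; noncomm_ring
    refine lt_of_pow_lt_pow_left₀ 2 hε.le ?_
    rw [sq, ← CStarRing.norm_self_mul_star, e]
    have : ‖u * (g - g * u)‖ ≤ 1 * ‖g - g * u‖ := (norm_mul_le _ _).trans (by gcongr)
    linarith [norm_sub_le (g - g * u) (u * (g - g * u))]
  rwa [D.closed.closure_eq] at this

end
end LiftNil

namespace LiftNil
open Filter Topology Polynomial


/-- Extra data: essential, strictly complete, sigma-unital. -/
structure SigmaData {M : Type*} [CStarAlgebra M] [PartialOrder M] [StarOrderedRing M]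
    (J : Submodule ℂ M) : Prop where
  ideal : IdealData J
  ess : ∀ m : M, (∀ j ∈ J, m * j = 0) → m = 0
  strict : ∀ S : ℕ → M, (∀ N, IsSelfAdjoint (S N)) → (∀ j ∈ J, CauchySeq fun N => S N * j) →
    ∃ E : M, IsSelfAdjoint E ∧ ∀ j ∈ J, Tendsto (fun N => S N * j) atTop (𝓝 (E * j))
  sig : ∃ e : ℕ → M, (∀ k, e k ∈ J) ∧ ∀ j ∈ J, Tendsto (fun k => j * e k) atTop (𝓝 j)

section
variable {M : Type*} [CStarAlgebra M] [PartialOrder M] [StarOrderedRing M]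

theorem sq_le_self_of (T : M) (h0 : 0 ≤ T) (h1 : T ≤ 1) : T * T ≤ T := by
  have hT : IsSelfAdjoint T := .of_nonneg h0
  have a1 := hT.conjugate_nonneg (sub_nonneg.2 h1)
  have a2 := ((IsSelfAdjoint.one M).sub hT).conjugate_nonneg h0
  have := add_nonneg a1 a2
  rw [← sub_nonneg]
  convert this using 1
  noncomm_ring

theorem exists_h (z : M) (hz : 0 ≤ z) (ε : ℝ) (hε : 0 < ε) :
    ∃ h : M, 0 ≤ h ∧ h ≤ 1 ∧ (∃ r, h = z * r) ∧ ‖(1 - h) * z‖ ≤ ε := by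
  have hsa : IsSelfAdjoint z := .of_nonneg hz
  have hsp : ∀ x ∈ spectrum ℝ z, 0 ≤ x := fun x hx => spectrum_nonneg_of_nonneg hz hx
  have hpos : ∀ x : ℝ, 0 < max x 0 + ε := fun x => by positivity
  have hc : Continuous fun t : ℝ => (max t 0 + ε)⁻¹ :=
    Continuous.inv₀ (by fun_prop) fun x => (hpos x).ne'
  have hc2 : Continuous fun t : ℝ => t * (max t 0 + ε)⁻¹ := by fun_prop
  refine ⟨cfc (fun t : ℝ => t * (max t 0 + ε)⁻¹) z, ?_, ?_, ⟨cfc (fun t : ℝ => (max t 0 + ε)⁻¹) z, ?_⟩, ?_⟩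
  · exact cfc_nonneg fun x hx => mul_nonneg (hsp x hx) (inv_nonneg.2 (hpos x).le)
  · refine cfc_le_one _ _ fun x hx => ?_
    rw [mul_inv_le_iff₀ (hpos x)]
    have := le_max_left x 0
    linarith
  · rw [cfc_mul (fun t : ℝ => t) (fun t : ℝ => (max t 0 + ε)⁻¹) z (by fun_prop) hc.continuousOn]
    rw [cfc_id' ℝ z]
  · have e : (1 - cfc (fun t : ℝ => t * (max t 0 + ε)⁻¹) z) * z =
        cfc (fun t : ℝ => (1 - t * (max t 0 + ε)⁻¹) * t) z := by
      rw [cfc_mul (fun t : ℝ => 1 - t * (max t 0 + ε)⁻¹) (fun t => t) z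
        (by exact (continuous_const.sub hc2).continuousOn) (by fun_prop),
        cfc_sub (fun _ : ℝ => (1 : ℝ)) (fun t : ℝ => t * (max t 0 + ε)⁻¹) z (by fun_prop) hc2.continuousOn,
        cfc_id' ℝ z, cfc_const_one ℝ z]
    rw [e]
    refine norm_cfc_le hε.le fun x hx => ?_
    have hx := hsp x hx
    rw [max_eq_left hx]
    have hp : 0 < x + ε := by linarith
    have : (1 - x * (x + ε)⁻¹) * x = ε * (x / (x + ε)) := by field_simp; ring
    rw [this, Real.norm_eq_abs, abs_of_nonneg (by positivity)]
    have : x / (x + ε) ≤ 1 := by rw [div_le_one hp]; linarith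
    nlinarith

theorem cfc_comm_small_finset (f : ℝ → ℝ) (hf : Continuous f) (F : Finset M) (ε : ℝ) (hε : 0 < ε) :
    ∃ δ > 0, ∀ y ∈ F, ∀ d : M, IsSelfAdjoint d → ‖d‖ ≤ 1 → ‖d * y - y * d‖ < δ →
      ‖cfc f d * y - y * cfc f d‖ < ε := by
  classical
  induction F using Finset.induction_on with
  | empty => exact ⟨1, one_pos, by simp⟩
  | insert a s _ ih =>
    obtain ⟨δ, h0, h⟩ := ih
    obtain ⟨δ', h0', h'⟩ := cfc_comm_small f hf a ε hε
    refine ⟨min δ δ', lt_min h0 h0', fun y hy d hd hd1 hlt => ?_⟩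
    rcases Finset.mem_insert.1 hy with rfl | hy
    · exact h' d hd hd1 (hlt.trans_le (min_le_right _ _))
    · exact h y hy d hd hd1 (hlt.trans_le (min_le_left _ _))

/-- square root of an element of `J`. -/
theorem IdealData.exists_sqrt {J : Submodule ℂ M} (D : IdealData J) (d : M) (hd : d ∈ J)
    (hd0 : 0 ≤ d) (hd1 : ‖d‖ ≤ 1) : cfc Real.sqrt d ∈ J ∧ IsSelfAdjoint (cfc Real.sqrt d) ∧
      cfc Real.sqrt d * cfc Real.sqrt d = d ∧ ‖cfc Real.sqrt d‖ ≤ 1 := by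
  have hsa : IsSelfAdjoint d := .of_nonneg hd0
  have h1 : IsSelfAdjoint (cfc Real.sqrt d) := cfc_predicate _ _
  have h2 : cfc Real.sqrt d * cfc Real.sqrt d = d := by
    rw [← cfc_mul Real.sqrt Real.sqrt d Real.continuous_sqrt.continuousOn
      Real.continuous_sqrt.continuousOn]
    conv_rhs => rw [← cfc_id' ℝ d]
    exact cfc_congr fun x hx => Real.mul_self_sqrt (spectrum_nonneg_of_nonneg hd0 hx)
  refine ⟨D.mem_of_mul_star _ ?_, h1, h2, ?_⟩
  · rwa [h1.star_eq, h2]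
  · have := CStarRing.norm_star_mul_self (x := cfc Real.sqrt d)
    rw [h1.star_eq, h2] at this
    nlinarith [norm_nonneg (cfc Real.sqrt d)]

theorem limit_mem {J : Submodule ℂ M} (D : SigmaData J) (t : ℕ → M) (ht : ∀ k, t k ∈ J)
    (C : ℝ) (hC : ∀ k, ‖t k‖ ≤ C * (1 / 2) ^ k) (m : M)
    (hm : ∀ j ∈ J, Tendsto (fun N => (∑ k ∈ Finset.range N, t k) * j) atTop (𝓝 (m * j))) : m ∈ J := by
  have hs : Summable t := Summable.of_norm_bounded
    (summable_geometric_two.mul_left C) hC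
  have hl := hs.hasSum.tendsto_sum_nat
  have hmem : (∑' k, t k) ∈ J := D.ideal.closed.mem_of_tendsto hl
    (Eventually.of_forall fun N => J.sum_mem fun k _ => ht k)
  have : m - ∑' k, t k = 0 := by
    apply D.ess
    intro j hj
    have := tendsto_nhds_unique (hm j hj) (hl.mul_const j)
    rw [sub_mul, this, sub_self]
  rw [sub_eq_zero] at this
  rwa [this]

end
end LiftNil

namespace LiftNil
open Filter Topology Polynomial


section
variable {M : Type*} [CStarAlgebra M] [PartialOrder M] [StarOrderedRing M]

theorem exists_u {J : Submodule ℂ M} (D : IdealData J) (F : Finset M) (G : ℕ → Finset M)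
    (hG : ∀ k, ∀ g ∈ G k, g ∈ J) (η : ℕ → ℝ) (hη : ∀ k, 0 < η k) :
    ∃ u : ℕ → M, Monotone u ∧ (∀ k, u k ∈ J) ∧ (∀ k, 0 ≤ u k) ∧ (∀ k, ‖u k‖ < 1) ∧
      (∀ k, ∀ y ∈ F, ‖u k * y - y * u k‖ < η k) ∧ ∀ k, ∀ g ∈ G k, ‖g - g * u k‖ < η k := by
  let P := {u : M // u ∈ J ∧ 0 ≤ u ∧ ‖u‖ < 1}
  have step : ∀ (k : ℕ) (p : P), ∃ q : P, p.1 ≤ q.1 ∧ (∀ y ∈ F, ‖q.1 * y - y * q.1‖ < η k) ∧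
      ∀ g ∈ G k, ‖g - g * q.1‖ < η k := by
    intro k p
    obtain ⟨u, h1, h2, h3, h4, h5⟩ := D.quasicentral p.1 p.2.1 p.2.2.1 p.2.2.2 F (G k) (hG k) _ (hη k)
    exact ⟨⟨u, h1, p.2.2.1.trans h2, h3⟩, h2, h4, h5⟩
  choose q hq1 hq2 hq3 using step
  let z : P := ⟨0, J.zero_mem, le_rfl, by simp⟩
  let s : ℕ → P := fun k => Nat.rec (q 0 z) (fun k p => q (k + 1) p) k
  have hs : ∀ k, ∃ p, s k = q k p := by
    intro k
    cases k with
    | zero => exact ⟨z, rfl⟩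
    | succ k => exact ⟨s k, rfl⟩
  refine ⟨fun k => (s k).1, monotone_nat_of_le_succ fun k => hq1 (k + 1) (s k), fun k => (s k).2.1,
    fun k => (s k).2.2.1, fun k => (s k).2.2.2, fun k => ?_, fun k => ?_⟩
  · obtain ⟨p, hp⟩ := hs k
    simp only [hp]; exact hq2 k p
  · obtain ⟨p, hp⟩ := hs k
    simp only [hp]; exact hq3 k p

/-- The SAW*-type lemma. -/
theorem saw {J : Submodule ℂ M} (D : SigmaData J) (Y : Finset M) (z : M)
    (hY : ∀ y ∈ Y, y * z ∈ J) :
    ∃ E : M, IsSelfAdjoint E ∧ (∀ y ∈ Y, y * E ∈ J) ∧ (1 - E) * z ∈ J := by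
  classical
  have I := D.ideal
  set z' := z * star z with hz'
  have hz0 : 0 ≤ z' := mul_star_self_nonneg z
  have hYz : ∀ y ∈ Y, y * z' ∈ J := fun y hy => by
    rw [hz', ← mul_assoc]; exact I.mul_right _ _ (hY y hy)
  have hp : ∀ k : ℕ, (0 : ℝ) < (1 / 2) ^ k := fun k => by positivity
  have hex : ∀ k : ℕ, ∃ h : M, 0 ≤ h ∧ h ≤ 1 ∧ (∃ r, h = z' * r) ∧ ‖(1 - h) * z'‖ ≤ (1 / 2) ^ k :=
    fun k => exists_h z' hz0 _ (hp k)
  choose h h0 h1 hr hhz using hex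
  have hhn : ∀ k, ‖h k‖ ≤ 1 := fun k => (CStarAlgebra.norm_le_one_iff_of_nonneg _ (h0 k)).2 (h1 k)
  have hhn' : ∀ k, ‖1 - h k‖ ≤ 1 := fun k =>
    (CStarAlgebra.norm_le_one_iff_of_nonneg _ (sub_nonneg.2 (h1 k))).2 (by simpa using h0 k)
  have hYh : ∀ k, ∀ y ∈ Y, y * h k ∈ J := fun k y hy => by
    obtain ⟨r, hr⟩ := hr k
    rw [hr, ← mul_assoc]; exact I.mul_right _ _ (hYz y hy)
  obtain ⟨e, heJ, he⟩ := D.sig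
  set F : Finset M := insert z' Y with hF
  have hδ : ∀ k : ℕ, ∃ δ > 0, ∀ y ∈ F, ∀ d : M, IsSelfAdjoint d → ‖d‖ ≤ 1 → ‖d * y - y * d‖ < δ →
      ‖cfc Real.sqrt d * y - y * cfc Real.sqrt d‖ < (1 / 2) ^ k := fun k =>
    cfc_comm_small_finset _ Real.continuous_sqrt F _ (hp k)
  choose δ hδ0 hδ using hδ
  set η : ℕ → ℝ := fun k => min ((1 / 4) ^ k) (min (δ k) (δ (k - 1)) / 2) with hη
  obtain ⟨u, umono, uJ, u0, u1, uF, uG⟩ := exists_u I F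
    (fun k => (Finset.range (k + 1)).image e ∪ Y.image (fun y => y * h k)) (by
      intro k g hg
      simp only [Finset.mem_union, Finset.mem_image] at hg
      rcases hg with ⟨i, _, rfl⟩ | ⟨y, hy, rfl⟩
      · exact heJ i
      · exact hYh k y hy) η (fun k => by
      have := hδ0 k; have := hδ0 (k - 1)
      simp only [hη]; positivity)
  have hη4 : ∀ k, η k ≤ (1 / 4) ^ k := fun k => min_le_left _ _
  have hηδ : ∀ k, η k + η (k + 1) ≤ δ k := by
    intro k
    have a1 : η k ≤ δ k / 2 := (min_le_right _ _).trans (by gcongr; exact min_le_left _ _)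
    have a2 : η (k + 1) ≤ δ k / 2 := (min_le_right _ _).trans (by gcongr; exact min_le_right _ _)
    linarith
  have uone : ∀ k, u k ≤ 1 := fun k => (CStarAlgebra.norm_le_one_iff_of_nonneg _ (u0 k)).1 (u1 k).le
  have usa : ∀ k, IsSelfAdjoint (u k) := fun k => .of_nonneg (u0 k)
  -- u is an approximate unit
  have uright : ∀ j ∈ J, Tendsto (fun N => j * u N) atTop (𝓝 j) := by
    intro j hj
    rw [Metric.tendsto_atTop]
    intro ε hε
    obtain ⟨i, hi⟩ := (Metric.tendsto_atTop.1 (he j hj)) (ε / 4) (by positivity)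
    have hi := hi i le_rfl
    rw [dist_comm, dist_eq_norm] at hi
    have hlim : Tendsto (fun N : ℕ => ‖j‖ * (1 / 4 : ℝ) ^ N) atTop (𝓝 (‖j‖ * 0)) :=
      (tendsto_pow_atTop_nhds_zero_of_lt_one (by norm_num) (by norm_num)).const_mul _
    rw [mul_zero] at hlim
    obtain ⟨N0, hN0⟩ := eventually_atTop.1 (hlim.eventually_lt_const (half_pos hε))
    refine ⟨max N0 i, fun N hN => ?_⟩
    have hN1 := hN0 N ((le_max_left _ _).trans hN)
    have hN2 : i ≤ N := (le_max_right _ _).trans hN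
    rw [dist_comm, dist_eq_norm]
    have eq : j - j * u N = (j - j * e i) - (j - j * e i) * u N + j * (e i - e i * u N) := by noncomm_ring
    rw [eq]
    have b1 : ‖(j - j * e i) * u N‖ ≤ ‖j - j * e i‖ * 1 := (norm_mul_le _ _).trans (by gcongr; exact (u1 N).le)
    have b2 : ‖j * (e i - e i * u N)‖ ≤ ‖j‖ * (1 / 4) ^ N := by
      refine (norm_mul_le _ _).trans ?_
      gcongr
      refine (uG N (e i) ?_).le.trans (hη4 N)
      simp only [Finset.mem_union, Finset.mem_image]
      exact Or.inl ⟨i, by simp; omega, rfl⟩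
    have b3 := norm_add_le ((j - j * e i) - (j - j * e i) * u N) (j * (e i - e i * u N))
    have b4 := norm_sub_le (j - j * e i) ((j - j * e i) * u N)
    linarith
  have uleft : ∀ j ∈ J, Tendsto (fun N => u N * j) atTop (𝓝 j) := by
    intro j hj
    have := (uright _ (I.star_mem _ hj)).star
    simpa [(usa _).star_eq] using this
  -- increments
  set d : ℕ → M := fun k => u (k + 1) - u k with hd
  have d0 : ∀ k, 0 ≤ d k := fun k => sub_nonneg.2 (umono (Nat.le_succ k))
  have dsa : ∀ k, IsSelfAdjoint (d k) := fun k => .of_nonneg (d0 k)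
  have dJ : ∀ k, d k ∈ J := fun k => J.sub_mem (uJ _) (uJ _)
  have d1 : ∀ k, ‖d k‖ ≤ 1 := fun k => by
    refine (CStarAlgebra.norm_le_one_iff_of_nonneg _ (d0 k)).2 ?_
    exact (sub_le_self _ (u0 k)).trans (uone _)
  have dle : ∀ k, d k ≤ 1 - u k := fun k => sub_le_sub_right (uone _) _
  set v : ℕ → M := fun k => cfc Real.sqrt (d k) with hv
  have hvv := fun k => I.exists_sqrt (d k) (dJ k) (d0 k) (d1 k)
  have vJ : ∀ k, v k ∈ J := fun k => (hvv k).1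
  have vsa : ∀ k, IsSelfAdjoint (v k) := fun k => (hvv k).2.1
  have vsq : ∀ k, v k * v k = d k := fun k => (hvv k).2.2.1
  have v1 : ∀ k, ‖v k‖ ≤ 1 := fun k => (hvv k).2.2.2
  have vcomm : ∀ k, ∀ y ∈ F, ‖v k * y - y * v k‖ ≤ (1 / 2) ^ k := by
    intro k y hy
    refine (hδ k y hy (d k) (dsa k) (d1 k) ?_).le
    have eq : d k * y - y * d k = (u (k + 1) * y - y * u (k + 1)) - (u k * y - y * u k) := by
      simp only [hd]; noncomm_ring
    rw [eq]
    have := norm_sub_le (u (k + 1) * y - y * u (k + 1)) (u k * y - y * u k)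
    linarith [uF k y hy, uF (k + 1) y hy, hηδ k]
  set t : ℕ → M := fun k => v k * h k * v k with ht
  have t0 : ∀ k, 0 ≤ t k := fun k => (vsa k).conjugate_nonneg (h0 k)
  have tJ : ∀ k, t k ∈ J := fun k => I.mul_left _ _ (vJ k)
  have tle : ∀ k, t k ≤ d k := fun k => by
    have := (vsa k).conjugate_le_conjugate (h1 k)
    rwa [mul_one, vsq] at this
  set S : ℕ → M := fun N => ∑ k ∈ Finset.range N, t k with hS
  have Ssa : ∀ N, IsSelfAdjoint (S N) := fun N =>
    .of_nonneg (Finset.sum_nonneg fun k _ => t0 k)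
  have Smono : Monotone S := monotone_nat_of_le_succ fun k => by
    simp only [hS, Finset.sum_range_succ]; exact le_add_of_nonneg_right (t0 k)
  have USmono : Monotone fun N => u N - S N := monotone_nat_of_le_succ fun k => by
    simp only [hS, Finset.sum_range_succ]
    rw [← sub_nonneg]
    have := sub_nonneg.2 (tle k)
    convert this using 1
    simp only [hd]; abel
  have Scau : ∀ j ∈ J, CauchySeq fun N => S N * j := by
    intro j hj
    rw [Metric.cauchySeq_iff']
    intro ε hε
    obtain ⟨N, hN⟩ := Metric.cauchySeq_iff'.1 (uleft j hj).cauchySeq (ε ^ 2 / (‖j‖ + 1)) (by positivity)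
    refine ⟨N, fun n hn => ?_⟩
    have hN := hN n hn
    rw [dist_eq_norm] at hN ⊢
    rw [← sub_mul] at hN ⊢
    set T := S n - S N
    have T0 : 0 ≤ T := sub_nonneg.2 (Smono hn)
    have TU : T ≤ u n - u N := by
      have := sub_nonneg.2 (USmono hn)
      rw [← sub_nonneg]
      convert this using 1
      simp only [T]; abel
    have T1 : T ≤ 1 := TU.trans ((sub_le_self _ (u0 N)).trans (uone n))
    have Tsa : IsSelfAdjoint T := .of_nonneg T0
    refine lt_of_pow_lt_pow_left₀ 2 hε.le ?_
    have c1 : ‖T * j‖ ^ 2 = ‖star j * (T * T) * j‖ := by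
      rw [sq, ← CStarRing.norm_star_mul_self, star_mul, Tsa.star_eq]
      simp only [mul_assoc]
    have TT0 : 0 ≤ T * T := by simpa [Tsa.star_eq] using star_mul_self_nonneg T
    have c2 : ‖star j * (T * T) * j‖ ≤ ‖star j * (u n - u N) * j‖ :=
      CStarAlgebra.norm_le_norm_of_nonneg_of_le (star_left_conjugate_nonneg TT0 j)
        (star_left_conjugate_le_conjugate ((sq_le_self_of T T0 T1).trans TU) j)
    have c3 : ‖star j * (u n - u N) * j‖ ≤ ‖j‖ * ‖(u n - u N) * j‖ := by
      rw [mul_assoc]; exact (norm_mul_le _ _).trans (by rw [norm_star])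
    rw [c1]
    refine (c2.trans c3).trans_lt ?_
    rw [lt_div_iff₀ (by positivity)] at hN
    nlinarith [norm_nonneg j, norm_nonneg ((u n - u N) * j), sq_nonneg ε]
  obtain ⟨E, Esa, hE⟩ := D.strict S Ssa Scau
  refine ⟨E, Esa, ?_, ?_⟩
  · intro y hy
    refine limit_mem D (fun k => y * t k) (fun k => I.mul_left _ _ (tJ k)) (2 + ‖y‖) ?_ _ ?_
    · intro k
      have eq : y * t k = (y * h k * v k) * 0 - (v k * y - y * v k) * (h k * v k)
          + v k * (y * h k * v k) := by
        simp only [ht]; noncomm_ring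
      rw [mul_zero, zero_sub] at eq
      have c1 : ‖(v k * y - y * v k) * (h k * v k)‖ ≤ (1 / 2) ^ k * (1 * 1) := by
        refine (norm_mul_le _ _).trans ?_
        gcongr
        · exact vcomm k y (by simp [hF, hy])
        · exact (norm_mul_le _ _).trans (by gcongr; exacts [hhn k, v1 k])
      set s := y * h k with hs
      have hsn : ‖s‖ ≤ ‖y‖ := by
        have := norm_mul_le y (h k)
        have := hhn k
        nlinarith [norm_nonneg y]
      have c2 : ‖s * v k‖ ^ 2 ≤ (1 / 4) ^ k * ‖y‖ := by
        have : ‖s * v k‖ ^ 2 = ‖s * d k * star s‖ := by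
          rw [sq, ← CStarRing.norm_self_mul_star, star_mul, (vsa k).star_eq, ← vsq]
          simp only [mul_assoc]
        rw [this]
        have c3 : ‖s * d k * star s‖ ≤ ‖s * (1 - u k) * star s‖ :=
          CStarAlgebra.norm_le_norm_of_nonneg_of_le (star_right_conjugate_nonneg (d0 k) s)
            (star_right_conjugate_le_conjugate (dle k) s)
        refine c3.trans ((norm_mul_le _ _).trans ?_)
        rw [norm_star, mul_sub, mul_one]
        gcongr
        refine (uG k s ?_).le.trans (hη4 k)
        simp only [Finset.mem_union, Finset.mem_image]
        exact Or.inr ⟨y, hy, rfl⟩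
      have c4 : ‖s * v k‖ ≤ (1 / 2) ^ k * (1 + ‖y‖) := by
        refine le_of_sq_le_sq ?_ (by positivity)
        refine c2.trans ?_
        have : ((1 / 2 : ℝ) ^ k) ^ 2 = (1 / 4) ^ k := by
          rw [← pow_mul, mul_comm, pow_mul]; norm_num
        rw [mul_pow, this]
        gcongr
        nlinarith [norm_nonneg y]
      have c5 : ‖v k * (s * v k)‖ ≤ 1 * ‖s * v k‖ :=
        (norm_mul_le _ _).trans (by gcongr; exact v1 k)
      rw [eq]
      have c6 := norm_add_le (-((v k * y - y * v k) * (h k * v k))) (v k * (s * v k))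
      rw [norm_neg] at c6
      nlinarith
    · intro j hj
      have := (hE j hj).const_mul y
      simpa only [hS, ← Finset.mul_sum, mul_assoc] using this
  · have hz1 : (1 - u 0 - E) * z' ∈ J := by
      refine limit_mem D (fun k => v k * (1 - h k) * v k * z')
        (fun k => I.mul_right _ _ (I.mul_left _ _ (vJ k))) 2 ?_ _ ?_
      · intro k
        have eq : v k * (1 - h k) * v k * z' = v k * ((1 - h k) * (v k * z' - z' * v k)) +
          v k * ((1 - h k) * z') * v k := by noncomm_ring
        rw [eq]
        have c1 : ‖v k * ((1 - h k) * (v k * z' - z' * v k))‖ ≤ 1 * (1 * (1 / 2) ^ k) := by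
          refine (norm_mul_le _ _).trans ?_
          gcongr
          · exact v1 k
          · refine (norm_mul_le _ _).trans ?_
            gcongr
            · exact hhn' k
            · exact vcomm k z' (by simp [hF])
        have c2 : ‖v k * ((1 - h k) * z') * v k‖ ≤ 1 * (1 / 2) ^ k * 1 := by
          refine (norm_mul_le _ _).trans ?_
          gcongr
          · refine (norm_mul_le _ _).trans ?_
            gcongr
            exacts [v1 k, hhz k]
          · exact v1 k
        refine (norm_add_le _ _).trans ?_
        linarith
      · intro j hj
        have hj' : z' * j ∈ J := I.mul_left _ _ hj
        have hsum : ∀ N, ∑ k ∈ Finset.range N, v k * (1 - h k) * v k * z' = (u N - u 0 - S N) * z' := by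
          intro N
          rw [← Finset.sum_mul]
          congr 1
          rw [← Finset.sum_range_sub, hS, ← Finset.sum_sub_distrib]
          refine Finset.sum_congr rfl fun k _ => ?_
          change _ = d k - t k
          rw [← vsq]; simp only [ht]; noncomm_ring
        simp only [hsum]
        have := ((uleft _ hj').sub (tendsto_const_nhds (x := u 0 * (z' * j)))).sub (hE _ hj')
        simpa only [sub_mul, mul_assoc, one_mul] using this
    have hz2 : (1 - E) * z' ∈ J := by
      have := J.add_mem hz1 (I.mul_right z' _ (uJ 0))
      convert this using 1
      noncomm_ring
    apply I.mem_of_mul_star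
    have := I.mul_right (star (1 - E)) _ hz2
    rw [star_mul]
    simpa only [hz', mul_assoc] using this

end
end LiftNil

namespace LiftNil
open Filter Topology Polynomial


/-- clamp functions -/
noncomputable def fi (i : ℕ) (t : ℝ) : ℝ := max 0 (min 1 (2 ^ (i + 1) * t - 1))

theorem fi_cont (i : ℕ) : Continuous (fi i) := by unfold fi; fun_prop

theorem fi_nonneg (i : ℕ) (t : ℝ) : 0 ≤ fi i t := le_max_left _ _
theorem fi_le_one (i : ℕ) (t : ℝ) : fi i t ≤ 1 := by
  unfold fi; exact max_le zero_le_one (min_le_left _ _)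

theorem fi_zero (i : ℕ) : fi i 0 = 0 := by unfold fi; norm_num

theorem fi_one (i : ℕ) : fi i 1 = 1 := by
  unfold fi
  have : (1 : ℝ) ≤ 2 ^ i := one_le_pow₀ (by norm_num)
  rw [min_eq_left (by rw [pow_succ]; linarith)]
  norm_num

theorem fi_mul {i i' : ℕ} (h : i < i') (t : ℝ) : fi i' t * fi i t = fi i t := by
  by_cases h0 : 2 ^ (i + 1) * t - 1 ≤ 0
  · have : fi i t = 0 := by
      unfold fi
      rw [max_eq_left]
      exact (min_le_right _ _).trans h0
    rw [this, mul_zero]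
  · push Not at h0
    have : fi i' t = 1 := by
      unfold fi
      obtain ⟨k, rfl⟩ := Nat.exists_eq_add_of_lt h
      have h1 : (1 : ℝ) ≤ 2 ^ k := one_le_pow₀ (by norm_num)
      rw [min_eq_left, max_eq_right zero_le_one]
      have : (2 : ℝ) ^ (i + k + 1 + 1) * t = 2 * (2 ^ k * (2 ^ (i + 1) * t)) := by ring
      rw [this]
      nlinarith
    rw [this, one_mul]

section
variable {M : Type*} [CStarAlgebra M]

theorem cfc_kill {J : Submodule ℂ M} (hJ : IsClosed (J : Set M)) (W L : M)
    (hL : IsSelfAdjoint L) (hr : ∀ j ∈ J, j * L ∈ J) (h : W * L ∈ J) (f : ℝ → ℝ)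
    (hf : Continuous f) (hf0 : f 0 = 0) : W * cfc f L ∈ J := by
  have := cfc_intertwine J hJ 0 L W (.zero M) hL (by simp) hr (by simpa using h) f hf
  rw [cfc_apply_zero, hf0, map_zero, zero_mul, zero_sub] at this
  simpa using J.neg_mem this

theorem cfc_fix {J : Submodule ℂ M} (hJ : IsClosed (J : Set M)) (W L : M)
    (hL : IsSelfAdjoint L) (hl : ∀ j ∈ J, L * j ∈ J) (h : (1 - L) * W ∈ J) (f : ℝ → ℝ)
    (hf : Continuous f) (hf1 : f 1 = 1) : (1 - cfc f L) * W ∈ J := by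
  have := cfc_intertwine J hJ L 1 W hL (.one M) hl (by simp)
    (by have := J.neg_mem h; convert this using 1; noncomm_ring) f hf
  rw [cfc_apply_one, hf1, map_one, mul_one] at this
  have := J.neg_mem this
  convert this using 1; noncomm_ring

theorem cfc_fi_mul (L : M) {i i' : ℕ} (h : i < i') : cfc (fi i') L * cfc (fi i) L = cfc (fi i) L := by
  rw [← cfc_mul (fi i') (fi i) L (fi_cont _).continuousOn (fi_cont _).continuousOn]
  exact cfc_congr fun t _ => fi_mul h t

theorem cfc_fi_zero (i : ℕ) : cfc (fi i) (0 : M) = 0 := by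
  rw [cfc_apply_zero, fi_zero, map_zero]
theorem cfc_fi_one (i : ℕ) : cfc (fi i) (1 : M) = 1 := by
  rw [cfc_apply_one, fi_one, map_one]

theorem fi_sa (i : ℕ) (L : M) : IsSelfAdjoint (cfc (fi i) L) := cfc_predicate _ _

variable [PartialOrder M] [StarOrderedRing M]

/-- (C) -/
theorem propC {J : Submodule ℂ M} (D : IdealData J) (X L L' : M) (hL : IsSelfAdjoint L)
    (hL' : IsSelfAdjoint L') (h : (1 - L) * X * L' ∈ J) (i i' : ℕ) :
    (1 - cfc (fi i) L) * X * cfc (fi i') L' ∈ J := by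
  refine cfc_kill D.closed _ _ hL' (fun j hj => D.mul_right _ _ hj) ?_ _ (fi_cont _) (fi_zero _)
  rw [mul_assoc] at h ⊢
  exact cfc_fix D.closed _ _ hL (fun j hj => D.mul_left _ _ hj) h _ (fi_cont _) (fi_one _)

theorem chain_step {J : Submodule ℂ M} (D : SigmaData J) (X L : M) (hL : IsSelfAdjoint L) (j : ℕ)
    (h3 : X ^ (j + 1) * L ∈ J) (h4 : (1 - cfc (fi 0) L) * X * L ∈ J) :
    ∃ L' : M, IsSelfAdjoint L' ∧ X ^ j * L' ∈ J ∧ (1 - cfc (fi 0) L') * X * L' ∈ J ∧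
      cfc (fi 1) L * L' = L' ∧ (1 - L') * X * L ∈ J := by
  classical
  have I := D.ideal
  set P := cfc (fi 0) L with hP
  have Psa : IsSelfAdjoint P := fi_sa _ _
  obtain ⟨E, Esa, hE1, hE2⟩ := saw D {X ^ j, 1 - P} (X * L) (by
    intro y hy
    rcases Finset.mem_insert.1 hy with rfl | hy
    · rw [← mul_assoc, ← pow_succ]; exact h3
    · rw [Finset.mem_singleton.1 hy, ← mul_assoc]; exact h4)
  have e1 : X ^ j * E ∈ J := hE1 _ (by simp)
  have e2 : (1 - P) * E ∈ J := hE1 _ (by simp)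
  have e3 : E * (1 - P) ∈ J := by
    have := I.star_mem _ e2
    rwa [star_mul, Esa.star_eq, star_sub, star_one, Psa.star_eq] at this
  have hdiff : E - P * E * P ∈ J := by
    have := J.add_mem e2 (I.mul_left P _ e3)
    convert this using 1; noncomm_ring
  have L'sa : IsSelfAdjoint (P * E * P) := by
    have := Esa.conjugate P
    rwa [Psa.star_eq] at this
  have g1 : cfc (fi 1) L * (P * E * P) = P * E * P := by
    rw [← mul_assoc, ← mul_assoc, cfc_fi_mul L zero_lt_one]
  have g2 : (1 - P * E * P) * X * L ∈ J := by
    have := J.add_mem hE2 (I.mul_right (X * L) _ hdiff)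
    convert this using 1; noncomm_ring
  refine ⟨P * E * P, L'sa, ?_, ?_, g1, g2⟩
  · have := J.sub_mem e1 (I.mul_left (X ^ j) _ hdiff)
    convert this using 1; noncomm_ring
  · have := I.mul_right (P * E * P) _ (propC I X _ L L'sa hL g2 0 1)
    rwa [mul_assoc _ (cfc (fi 1) L), g1] at this

/-- chain data -/
structure Chain (J : Submodule ℂ M) (X : M) (n : ℕ) (L : ℕ → M) : Prop where
  sa : ∀ j, IsSelfAdjoint (L j)
  top : L n = 1
  bot : L 0 = 0
  unit : ∀ j < n, cfc (fi 1) (L (j + 1)) * L j = L j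
  shift : ∀ j < n, (1 - L j) * X * L (j + 1) ∈ J

theorem chain_aux {J : Submodule ℂ M} (D : SigmaData J) (X : M) (m : ℕ) : ∀ (L0 : M),
    IsSelfAdjoint L0 → X ^ (m + 1) * L0 ∈ J → (1 - cfc (fi 0) L0) * X * L0 ∈ J →
    ∃ L : ℕ → M, (∀ j, IsSelfAdjoint (L j)) ∧ L (m + 1) = L0 ∧ L 0 = 0 ∧
      ∀ j < m + 1, cfc (fi 1) (L (j + 1)) * L j = L j ∧ (1 - L j) * X * L (j + 1) ∈ J := by
  induction m with
  | zero =>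
    intro L0 h1 h2 h3
    refine ⟨fun j => if j = 0 then 0 else L0, ?_, by simp, by simp, ?_⟩
    · intro j
      dsimp only
      split_ifs
      exacts [.zero M, h1]
    · intro j hj
      obtain rfl : j = 0 := by omega
      simpa using h2
  | succ m ih =>
    intro L0 h1 h2 h3
    obtain ⟨L', a1, a2, a3, a4, a5⟩ := chain_step D X L0 h1 (m + 1) h2 h3
    obtain ⟨L, b1, b2, b3, b4⟩ := ih L' a1 a2 a3
    refine ⟨Function.update L (m + 2) L0, ?_, by simp, ?_, ?_⟩
    · intro j
      by_cases hj : j = m + 2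
      · rw [hj, Function.update_self]; exact h1
      · rw [Function.update_of_ne hj]; exact b1 j
    · rw [Function.update_of_ne (by omega)]; exact b3
    · intro j hj
      by_cases hj' : j = m + 1
      · subst hj'
        rw [Function.update_self, Function.update_of_ne (by omega), b2]
        exact ⟨a4, a5⟩
      · rw [Function.update_of_ne (by omega), Function.update_of_ne (by omega)]
        exact b4 j (by omega)

theorem exists_chain {J : Submodule ℂ M} (D : SigmaData J) (X : M) (n : ℕ) (hn : 1 ≤ n)
    (hX : X ^ n ∈ J) : ∃ L : ℕ → M, Chain J X n L := by
  obtain ⟨m, rfl⟩ := Nat.exists_eq_add_of_le' hn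
  obtain ⟨L, b1, b2, b3, b4⟩ := chain_aux D X m 1 (.one M) (by simpa using hX)
    (by rw [cfc_fi_one]; simp)
  exact ⟨L, b1, b2, b3, fun j hj => (b4 j hj).1, fun j hj => (b4 j hj).2⟩

end
end LiftNil

namespace LiftNil
open Filter Topology Polynomial


section
variable {M : Type*} [CStarAlgebra M] [PartialOrder M] [StarOrderedRing M]

/-- the family of near-projections -/
noncomputable def pj (L : ℕ → M) (j i : ℕ) : M := cfc (fi i) (L j)

theorem pj_sa (L : ℕ → M) (j i : ℕ) : IsSelfAdjoint (pj L j i) := fi_sa _ _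

theorem pj_norm (L : ℕ → M) (j i : ℕ) : ‖pj L j i‖ ≤ 1 :=
  norm_cfc_le zero_le_one fun x _ => by
    rw [Real.norm_eq_abs, abs_of_nonneg (fi_nonneg _ _)]; exact fi_le_one _ _

theorem Chain.mul_pj {J : Submodule ℂ M} {X : M} {n : ℕ} {L : ℕ → M} (C : Chain J X n L)
    {k j : ℕ} (hkj : k ≤ j) (hj : j ≤ n) {i i' : ℕ} (hi : i < i') :
    pj L j i' * pj L k i = pj L k i := by
  induction j, hkj using Nat.le_induction generalizing i' with
  | base => exact cfc_fi_mul _ hi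
  | succ j hkj ih =>
    have h1 : pj L (j + 1) 1 * pj L j (i + 1) = pj L j (i + 1) := by
      have hb : IsClosed (((⊥ : Submodule ℂ M)) : Set M) := by simp
      have := cfc_kill (J := ⊥) hb (1 - pj L (j + 1) 1) (L j) (C.sa j) (by simp) (by
        rw [Submodule.mem_bot, sub_mul, one_mul, sub_eq_zero]
        exact (C.unit j (by omega)).symm) (fi (i + 1)) (fi_cont _) (fi_zero _)
      rw [Submodule.mem_bot, sub_mul, one_mul, sub_eq_zero] at this
      exact this.symm
    have h2 : pj L (j + 1) i' * pj L (j + 1) 1 * pj L j (i + 1) = pj L j (i + 1) := by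
      rcases Nat.lt_or_ge 1 i' with h | h
      · rw [show pj L (j + 1) i' * pj L (j + 1) 1 = pj L (j + 1) 1 from cfc_fi_mul _ h, h1]
      · obtain rfl : i' = 1 := by omega
        rw [mul_assoc, h1, h1]
    rw [mul_assoc, h1] at h2
    have h3 := ih (by omega) (Nat.lt_succ_self i)
    rw [← h3, ← mul_assoc, h2]

theorem Chain.pj_mul {J : Submodule ℂ M} {X : M} {n : ℕ} {L : ℕ → M} (C : Chain J X n L)
    {k j : ℕ} (hkj : k ≤ j) (hj : j ≤ n) {i i' : ℕ} (hi : i < i') :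
    pj L k i * pj L j i' = pj L k i := by
  have := congrArg star (C.mul_pj hkj hj hi)
  rwa [star_mul, (pj_sa _ _ _).star_eq, (pj_sa _ _ _).star_eq] at this

/-- triangularity predicate -/
def Tri (L : ℕ → M) (n β : ℕ) (a : M) : Prop :=
  ∀ j < n, pj L j 2 * (a * pj L (j + 1) β) = a * pj L (j + 1) β

theorem Chain.pow_eq_zero {J : Submodule ℂ M} {X : M} {n : ℕ} {L : ℕ → M} (C : Chain J X n L)
    (a : M) (h : Tri L n 3 a) : a ^ n = 0 := by
  have key : ∀ k ≤ n, pj L (n - k) 2 * a ^ k = a ^ k := by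
    intro k
    induction k with
    | zero => intro _; simp [pj, C.top, fi_one]
    | succ k ih =>
      intro hk
      have h1 := ih (by omega)
      have h2 : a ^ (k + 1) = a * pj L (n - (k + 1) + 1) 3 * a ^ k := by
        rw [show n - (k + 1) + 1 = n - k by omega]
        nth_rewrite 1 [← h1]
        rw [mul_assoc, ← mul_assoc (pj L (n - k) 3), C.mul_pj le_rfl (by omega) (by norm_num), h1,
          pow_succ']
      rw [h2, ← mul_assoc, h _ (by omega)]
  have := key n le_rfl
  rw [Nat.sub_self, pj, C.bot, cfc_fi_zero, zero_mul] at this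
  exact this.symm

theorem Chain.exists_start {J : Submodule ℂ M} (D : IdealData J) {X : M} {n : ℕ} {L : ℕ → M}
    (C : Chain J X n L) : ∃ K : ℝ, ∀ β, ∃ a : M, Tri L n β a ∧ a - X ∈ J ∧ ‖a‖ ≤ K := by
  refine ⟨n * (1 * ‖X‖ * (1 + 1)), fun β => ⟨∑ k ∈ Finset.range n, pj L k 1 * X *
    (pj L (k + 1) (β + 1) - pj L k (β + 1)), ?_, ?_, ?_⟩⟩
  · intro j hj
    rw [Finset.sum_mul, Finset.mul_sum]
    refine Finset.sum_congr rfl fun k hk => ?_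
    rw [Finset.mem_range] at hk
    rcases Nat.lt_or_ge j k with h | h
    · have : (pj L (k + 1) (β + 1) - pj L k (β + 1)) * pj L (j + 1) β = 0 := by
        rw [sub_mul, C.mul_pj (by omega) (by omega) (by omega),
          C.mul_pj (by omega) (by omega) (by omega), sub_self]
      rw [mul_assoc _ _ (pj L (j + 1) β), this, mul_zero, mul_zero]
    · simp only [← mul_assoc]
      rw [C.mul_pj h hj.le (by norm_num)]
  · have hX : X = ∑ k ∈ Finset.range n, X * (pj L (k + 1) (β + 1) - pj L k (β + 1)) := by
      rw [← Finset.mul_sum, Finset.sum_range_sub (fun k => pj L k (β + 1))]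
      simp [pj, C.top, C.bot, fi_one, fi_zero]
    nth_rewrite 2 [hX]
    rw [← Finset.sum_sub_distrib]
    refine J.sum_mem fun k hk => ?_
    rw [Finset.mem_range] at hk
    have h1 : ∀ i, (1 - pj L k 1) * X * pj L (k + 1) i ∈ J := fun i =>
      propC D X _ _ (C.sa k) (C.sa _) (C.shift k hk) 1 i
    have h2 : (1 - pj L k 1) * X * pj L k (β + 1) ∈ J := by
      have := D.mul_right (pj L k (β + 1)) _ (h1 (β + 2))
      rwa [mul_assoc _ (pj L (k + 1) (β + 2)), C.mul_pj (by omega) (by omega) (by omega)] at this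
    have := J.sub_mem h2 (h1 (β + 1))
    convert this using 1
    noncomm_ring
  · refine (norm_sum_le_of_le _ (f := fun k => _) (n := fun _ => 1 * ‖X‖ * (1 + 1)) ?_).trans ?_
    · intro k hk
      refine (norm_mul_le _ _).trans ?_
      gcongr
      · refine (norm_mul_le _ _).trans ?_
        gcongr
        exact pj_norm _ _ _
      · refine (norm_sub_le _ _).trans ?_
        gcongr <;> exact pj_norm _ _ _
    · simp

theorem pinch (n : ℕ) (f : ℕ → M) (hf : ∀ k, IsSelfAdjoint (f k)) (w : M) (hw : 0 ≤ w)
    (h1 : ∑ k ∈ Finset.range n, f k = 1) :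
    w ≤ (n : ℝ) • ∑ k ∈ Finset.range n, f k * w * f k := by
  have h0 : 0 ≤ ∑ k ∈ Finset.range n, ∑ l ∈ Finset.range n, (f k - f l) * w * (f k - f l) :=
    Finset.sum_nonneg fun k _ => Finset.sum_nonneg fun l _ => ((hf k).sub (hf l)).conjugate_nonneg hw
  have e : ∑ k ∈ Finset.range n, ∑ l ∈ Finset.range n, (f k - f l) * w * (f k - f l) =
      (2 : ℝ) • ((n : ℝ) • ∑ k ∈ Finset.range n, f k * w * f k - w) := by
    have e1 : ∑ k ∈ Finset.range n, ∑ l ∈ Finset.range n, f k * w * f l = w := by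
      simp only [← Finset.mul_sum, ← Finset.sum_mul, h1, mul_one, one_mul]
    have e2 : ∑ k ∈ Finset.range n, ∑ l ∈ Finset.range n, f l * w * f k = w := by
      rw [Finset.sum_comm, e1]
    have e3 : ∑ k ∈ Finset.range n, ∑ l ∈ Finset.range n, f k * w * f k =
        (n : ℝ) • ∑ k ∈ Finset.range n, f k * w * f k := by
      simp only [Finset.sum_const, Finset.card_range, ← Nat.cast_smul_eq_nsmul ℝ, Finset.smul_sum]
    have e4 : ∑ k ∈ Finset.range n, ∑ l ∈ Finset.range n, f l * w * f l =
        (n : ℝ) • ∑ k ∈ Finset.range n, f k * w * f k := by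
      rw [Finset.sum_comm, e3]
    calc _ = ∑ k ∈ Finset.range n, ∑ l ∈ Finset.range n,
          (f k * w * f k - f k * w * f l - f l * w * f k + f l * w * f l) := by
          refine Finset.sum_congr rfl fun k _ => Finset.sum_congr rfl fun l _ => ?_
          noncomm_ring
      _ = _ := by
        simp only [Finset.sum_add_distrib, Finset.sum_sub_distrib, e1, e2, e3, e4]
        rw [two_smul]; abel
  rw [e] at h0
  have := smul_nonneg (by norm_num : (0 : ℝ) ≤ 1 / 2) h0
  rw [smul_smul] at this
  norm_num at this
  exact this

end
end LiftNil

namespace LiftNil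
open Filter Topology Polynomial


section
variable {M : Type*} [CStarAlgebra M] [PartialOrder M] [StarOrderedRing M]

theorem spec_norm (s : M) {x : ℝ} (hx : x ∈ spectrum ℝ s) : |x| ≤ ‖s‖ := by
  rcases subsingleton_or_nontrivial M with h | h
  · simp [spectrum.of_subsingleton] at hx
  · exact spectrum.norm_le_norm_of_mem hx

/-- The correction element. -/
theorem exists_w {J : Submodule ℂ M} (D : IdealData J) (a X : M) (haX : a - X ∈ J) (hX : ‖X‖ ≤ 1)
    (l ν : ℝ) (hl : 1 ≤ l) (hν : 0 ≤ ν) (ha : ‖a‖ ^ 2 ≤ l * (1 + ν)) :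
    ∃ w ∈ J, 0 ≤ w ∧ ‖w‖ ≤ ν ∧ ‖a * (1 - w) * star a‖ ≤ l := by
  have l0 : 0 < l := by linarith
  set s : M := l⁻¹ • (star a * a) with hs
  set t : M := l⁻¹ • (star X * X) with ht
  have s0 : 0 ≤ s := smul_nonneg (by positivity) (star_mul_self_nonneg a)
  have t0 : 0 ≤ t := smul_nonneg (by positivity) (star_mul_self_nonneg X)
  have ssa : IsSelfAdjoint s := .of_nonneg s0
  have tsa : IsSelfAdjoint t := .of_nonneg t0
  have sn : ‖s‖ ≤ 1 + ν := by
    rw [hs, norm_smul, norm_inv, Real.norm_of_nonneg l0.le, CStarRing.norm_star_mul_self,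
      inv_mul_le_iff₀ l0, ← sq]
    exact ha
  have tn : ‖t‖ ≤ 1 := by
    rw [ht, norm_smul, norm_inv, Real.norm_of_nonneg l0.le, CStarRing.norm_star_mul_self,
      inv_mul_le_iff₀ l0]
    nlinarith [norm_nonneg X]
  have hm : ∀ x : ℝ, 0 < max x 1 := fun x => by positivity
  have hm1 : ∀ x : ℝ, 1 ≤ max x 1 := fun x => le_max_right _ _
  have hci : Continuous fun x : ℝ => (max x 1)⁻¹ :=
    Continuous.inv₀ (by fun_prop) fun x => (hm x).ne'
  have hg : Continuous fun x : ℝ => 1 - (max x 1)⁻¹ := continuous_const.sub hci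
  have hρ : Continuous fun x : ℝ => √((max x 1)⁻¹) := hci.sqrt
  refine ⟨cfc (fun x : ℝ => 1 - (max x 1)⁻¹) s, ?_, ?_, ?_, ?_⟩
  · have hst : s - t ∈ J := by
      have h1 : star a * a - star X * X ∈ J := by
        have := J.add_mem (D.mul_left (star a) _ haX) (D.mul_right X _ (D.star_mem _ haX))
        convert this using 1
        rw [star_sub]; noncomm_ring
      have h2 : s - t = ((l⁻¹ : ℝ) : ℂ) • (star a * a - star X * X) := by
        rw [hs, ht, ← smul_sub, Complex.coe_smul]
      rw [h2]; exact J.smul_mem _ h1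
    have := cfc_intertwine J D.closed s t 1 ssa tsa (fun j hj => D.mul_left _ _ hj)
      (fun j hj => D.mul_right _ _ hj) (by simpa using hst) _ hg
    have ht0 : cfc (fun x : ℝ => 1 - (max x 1)⁻¹) t = 0 := by
      rw [← cfc_zero ℝ t]
      refine cfc_congr fun x hx => ?_
      have := (le_abs_self x).trans ((spec_norm t hx).trans tn)
      simp [max_eq_right this]
    simpa [ht0] using this
  · refine cfc_nonneg fun x _ => ?_
    have := inv_le_one_of_one_le₀ (hm1 x)
    linarith
  · refine norm_cfc_le hν fun x hx => ?_
    have h1 := (le_abs_self x).trans ((spec_norm s hx).trans sn)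
    have h2 : max x 1 ≤ 1 + ν := max_le h1 (by linarith)
    have h3 := inv_le_one_of_one_le₀ (hm1 x)
    have h4 : (1 + ν)⁻¹ ≤ (max x 1)⁻¹ := inv_anti₀ (hm x) h2
    have h5 : 1 - ν ≤ (1 + ν)⁻¹ := by
      rw [inv_eq_one_div, le_div_iff₀ (by linarith)]; nlinarith
    rw [Real.norm_eq_abs, abs_of_nonneg (by linarith)]
    linarith
  · set ρ := cfc (fun x : ℝ => √((max x 1)⁻¹)) s with hρd
    have ρsa : IsSelfAdjoint ρ := cfc_predicate _ _
    have e1 : 1 - cfc (fun x : ℝ => 1 - (max x 1)⁻¹) s = ρ * ρ := by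
      rw [hρd, ← cfc_mul _ _ s hρ.continuousOn hρ.continuousOn, ← cfc_one ℝ s,
        ← cfc_sub _ _ s (by exact continuous_const.continuousOn) hg.continuousOn]
      refine cfc_congr fun x _ => ?_
      rw [Real.mul_self_sqrt (inv_nonneg.2 (hm x).le)]
      simp
    have e2 : ‖a * (ρ * ρ) * star a‖ = ‖ρ * (star a * a) * ρ‖ := by
      have h1 : a * (ρ * ρ) * star a = (a * ρ) * star (a * ρ) := by
        rw [star_mul, ρsa.star_eq]; noncomm_ring
      have h2 : ρ * (star a * a) * ρ = star (a * ρ) * (a * ρ) := by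
        rw [star_mul, ρsa.star_eq]; noncomm_ring
      rw [h1, h2, CStarRing.norm_self_mul_star, CStarRing.norm_star_mul_self]
    have e3 : star a * a = l • s := by
      rw [hs, smul_smul, mul_inv_cancel₀ l0.ne', one_smul]
    have e4 : ρ * s * ρ = cfc (fun x : ℝ => √((max x 1)⁻¹) * x * √((max x 1)⁻¹)) s := by
      rw [cfc_mul (fun x : ℝ => √((max x 1)⁻¹) * x) (fun x : ℝ => √((max x 1)⁻¹)) s
        (by exact (hρ.mul continuous_id).continuousOn) hρ.continuousOn,
        cfc_mul (fun x : ℝ => √((max x 1)⁻¹)) (fun x => x) s hρ.continuousOn (by fun_prop),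
        cfc_id' ℝ s]
    have e5 : ‖ρ * s * ρ‖ ≤ 1 := by
      rw [e4]
      refine norm_cfc_le zero_le_one fun x hx => ?_
      have hx0 := spectrum_nonneg_of_nonneg s0 hx
      have : √((max x 1)⁻¹) * x * √((max x 1)⁻¹) = x * (max x 1)⁻¹ := by
        rw [mul_comm _ x, mul_assoc, Real.mul_self_sqrt (inv_nonneg.2 (hm x).le)]
      rw [this, Real.norm_eq_abs, abs_of_nonneg (mul_nonneg hx0 (inv_nonneg.2 (hm x).le)),
        mul_inv_le_iff₀ (hm x), one_mul]
      exact le_max_left _ _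
    rw [e1, e2, e3, mul_smul_comm, smul_mul_assoc, norm_smul, Real.norm_of_nonneg l0.le]
    nlinarith

theorem Chain.norm_step {J : Submodule ℂ M} (D : IdealData J) {X : M} {n : ℕ} (hn : 1 ≤ n)
    {L : ℕ → M} (C : Chain J X n L) (hX : ‖X‖ ≤ 1) (β : ℕ) (a : M) (ha : Tri L n (β + 2) a)
    (haX : a - X ∈ J) (l : ℝ) (hl : 1 ≤ l) (hal : ‖a‖ ^ 2 ≤ l * (1 + 1 / (4 * n ^ 2))) :
    ∃ a' : M, Tri L n β a' ∧ a' - X ∈ J ∧ ‖a'‖ ^ 2 ≤ l := by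
  have hn0 : (0 : ℝ) < n := by exact_mod_cast hn
  obtain ⟨w, wJ, w0, wn, hw⟩ := exists_w D a X haX hX l (1 / (4 * n ^ 2)) hl (by positivity) hal
  set f : ℕ → M := fun k => pj L (k + 1) (β + 1) - pj L k (β + 1) with hf
  have fsa : ∀ k, IsSelfAdjoint (f k) := fun k => (pj_sa _ _ _).sub (pj_sa _ _ _)
  have fn : ∀ k, ‖f k‖ ≤ 1 + 1 := fun k => (norm_sub_le _ _).trans
    (add_le_add (pj_norm _ _ _) (pj_norm _ _ _))
  have fsum : ∑ k ∈ Finset.range n, f k = 1 := by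
    rw [hf, Finset.sum_range_sub (fun k => pj L k (β + 1))]
    simp [pj, C.top, C.bot, fi_one, fi_zero]
  set W : M := (n : ℝ) • ∑ k ∈ Finset.range n, f k * w * f k with hW
  have hwW : w ≤ W := pinch n f fsa w w0 fsum
  have W0 : 0 ≤ W := w0.trans hwW
  have Wn : ‖W‖ ≤ 1 := by
    rw [hW, norm_smul, Real.norm_of_nonneg hn0.le]
    have h1 : ‖∑ k ∈ Finset.range n, f k * w * f k‖ ≤ n * ((1 + 1) * (1 / (4 * n ^ 2)) * (1 + 1)) := by
      refine (norm_sum_le_of_le _ (n := fun _ => (1 + 1) * (1 / (4 * (n : ℝ) ^ 2)) * (1 + 1)) ?_).trans ?_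
      · intro k _
        refine (norm_mul_le _ _).trans ?_
        gcongr
        · refine (norm_mul_le _ _).trans ?_
          gcongr
          exact fn k
        · exact fn k
      · simp
    calc _ ≤ (n : ℝ) * (n * ((1 + 1) * (1 / (4 * n ^ 2)) * (1 + 1))) := by gcongr
      _ = 1 := by field_simp; norm_num
  have W1 : W ≤ 1 := (CStarAlgebra.norm_le_one_iff_of_nonneg _ W0).1 Wn
  have WJ : W ∈ J := by
    rw [hW, ← Complex.coe_smul]
    exact J.smul_mem _ (J.sum_mem fun k _ => D.mul_right _ _ (D.mul_left _ _ wJ))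
  set d := 1 - W with hd
  have d0 : 0 ≤ d := sub_nonneg.2 W1
  have d1 : d ≤ 1 := sub_le_self _ W0
  have dsa : IsSelfAdjoint d := .of_nonneg d0
  refine ⟨a * d, ?_, ?_, ?_⟩
  · intro j hj
    have key : d * pj L (j + 1) β = pj L (j + 1) (β + 2) * (d * pj L (j + 1) β) := by
      have h1 : pj L (j + 1) (β + 2) * pj L (j + 1) β = pj L (j + 1) β :=
        C.mul_pj le_rfl hj (by omega)
      have h2 : pj L (j + 1) (β + 2) * (W * pj L (j + 1) β) = W * pj L (j + 1) β := by
        rw [hW, smul_mul_assoc, mul_smul_comm, Finset.sum_mul, Finset.mul_sum]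
        congr 1
        refine Finset.sum_congr rfl fun k hk => ?_
        rw [Finset.mem_range] at hk
        rcases Nat.lt_or_ge j k with h | h
        · have : f k * pj L (j + 1) β = 0 := by
            rw [hf]
            dsimp only
            rw [sub_mul, C.mul_pj (by omega) (by omega) (by omega),
              C.mul_pj (by omega) (by omega) (by omega), sub_self]
          rw [mul_assoc _ _ (pj L (j + 1) β), this, mul_zero, mul_zero]
        · have : pj L (j + 1) (β + 2) * f k = f k := by
            rw [hf]
            dsimp only
            rw [mul_sub, C.mul_pj (by omega) (by omega) (by omega),
              C.mul_pj (by omega) (by omega) (by omega)]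
          simp only [← mul_assoc]
          rw [this]
      rw [hd, sub_mul, one_mul, mul_sub, h1, h2]
    rw [mul_assoc, key, ← mul_assoc a, ← mul_assoc (pj L j 2), ha j hj]
  · have := J.sub_mem haX (D.mul_left a _ WJ)
    convert this using 1
    rw [hd]; noncomm_ring
  · have h1 : ‖a * d‖ ^ 2 = ‖a * (d * d) * star a‖ := by
      rw [sq, ← CStarRing.norm_self_mul_star, star_mul, dsa.star_eq]
      simp only [mul_assoc]
    rw [h1]
    refine le_trans ?_ hw
    have dd0 : 0 ≤ d * d := by simpa [dsa.star_eq] using star_mul_self_nonneg d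
    refine CStarAlgebra.norm_le_norm_of_nonneg_of_le (star_right_conjugate_nonneg dd0 a)
      (star_right_conjugate_le_conjugate ?_ a)
    exact (sq_le_self_of d d0 d1).trans (sub_le_sub_left hwW 1)

theorem sigma_lift {J : Submodule ℂ M} (D : SigmaData J) (X : M) (n : ℕ) (hn : 1 ≤ n)
    (hX : X ^ n ∈ J) (hX1 : ‖X‖ ≤ 1) : ∃ a : M, a - X ∈ J ∧ a ^ n = 0 ∧ ‖a‖ ≤ 1 := by
  obtain ⟨L, C⟩ := exists_chain D X n hn hX
  obtain ⟨K, hK⟩ := C.exists_start D.ideal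
  set q : ℝ := 1 + 1 / (4 * n ^ 2) with hq
  have hn0 : (0 : ℝ) < n := by exact_mod_cast hn
  have hq1 : 1 < q := by
    have : (0 : ℝ) < 1 / (4 * n ^ 2) := by positivity
    linarith
  have iter : ∀ S : ℕ, ∀ a : M, Tri L n (3 + 2 * S) a → a - X ∈ J → ‖a‖ ^ 2 ≤ q ^ S →
      ∃ a' : M, Tri L n 3 a' ∧ a' - X ∈ J ∧ ‖a'‖ ^ 2 ≤ 1 := by
    intro S
    induction S with
    | zero => intro a h1 h2 h3; exact ⟨a, h1, h2, by simpa using h3⟩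
    | succ S ih =>
      intro a h1 h2 h3
      obtain ⟨a', b1, b2, b3⟩ := C.norm_step D.ideal hn hX1 (3 + 2 * S) a h1 h2 (q ^ S)
        (one_le_pow₀ hq1.le) (by rwa [pow_succ] at h3)
      exact ih a' b1 b2 b3
  obtain ⟨S, hS⟩ := pow_unbounded_of_one_lt (K ^ 2) hq1
  obtain ⟨a, h1, h2, h3⟩ := hK (3 + 2 * S)
  obtain ⟨a', b1, b2, b3⟩ := iter S a h1 h2 ((pow_le_pow_left₀ (norm_nonneg _) h3 2).trans hS.le)
  exact ⟨a', b2, C.pow_eq_zero a' b1, by nlinarith [norm_nonneg a']⟩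

end
end LiftNil

namespace LiftNil
open Filter Topology Polynomial


section
variable {A : Type*} [NonUnitalCStarAlgebra A]

/-- the embedding -/
noncomputable def emb (a : A) : 𝓜(ℂ, A) := DoubleCentralizer.coeHom (𝕜 := ℂ) (A := A) a

theorem emb_norm (a : A) : ‖emb a‖ = ‖a‖ := by
  rw [← DoubleCentralizer.norm_fst]
  change ‖(DoubleCentralizer.coe ℂ a).fst‖ = _
  rw [DoubleCentralizer.coe_fst]
  exact ContinuousLinearMap.opNorm_mul_apply ℂ A a

theorem emb_sub (a b : A) : emb (a - b) = emb a - emb b := map_sub _ _ _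
theorem emb_mul (a b : A) : emb (a * b) = emb a * emb b := map_mul _ _ _
theorem emb_star (a : A) : emb (star a) = star (emb a) := map_star _ _
theorem emb_zero : emb (0 : A) = 0 := map_zero _
theorem emb_neg (a : A) : emb (-a) = -emb a := map_neg _ _
theorem emb_inj {a b : A} (h : emb a = emb b) : a = b := by
  rw [← sub_eq_zero, ← norm_eq_zero, ← emb_norm, emb_sub, h, sub_self, norm_zero]

theorem mul_emb (m : 𝓜(ℂ, A)) (a : A) : m * emb a = emb (m.fst a) := by
  refine DoubleCentralizer.ext _ _ _ _ (Prod.ext ?_ ?_)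
  · refine ContinuousLinearMap.ext fun x => ?_
    change m.fst (a * x) = m.fst a * x
    have hy : ∀ y : A, y * (m.fst (a * x) - m.fst a * x) = 0 := by
      intro y
      rw [mul_sub, ← m.central, ← mul_assoc, ← mul_assoc, m.central, sub_self]
    exact sub_eq_zero.1 ((CStarRing.star_mul_self_eq_zero_iff _).1 (hy _))
  · refine ContinuousLinearMap.ext fun x => ?_
    change m.snd x * a = x * m.fst a
    exact m.central x a

theorem emb_mul' (m : 𝓜(ℂ, A)) (a : A) : emb a * m = emb (m.snd a) := by
  have := congrArg star (mul_emb (star m) (star a))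
  rw [DoubleCentralizer.star_fst, star_star, emb_star, emb_star, star_mul, star_star, star_star,
    star_star] at this
  exact this

/-- the ideal -/
noncomputable def mI (A : Type*) [NonUnitalCStarAlgebra A] : Submodule ℂ 𝓜(ℂ, A) where
  carrier := Set.range (DoubleCentralizer.coeHom (𝕜 := ℂ) (A := A))
  add_mem' := by
    rintro _ _ ⟨a, rfl⟩ ⟨b, rfl⟩
    exact ⟨a + b, map_add _ _ _⟩
  zero_mem' := ⟨0, map_zero _⟩
  smul_mem' := by
    rintro c _ ⟨a, rfl⟩
    exact ⟨c • a, map_smul _ _ _⟩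

theorem mem_mI {m : 𝓜(ℂ, A)} : m ∈ mI A ↔ ∃ a, emb a = m := Iff.rfl

theorem emb_isometry : Isometry (emb : A → 𝓜(ℂ, A)) := by
  refine Isometry.of_dist_eq fun a b => ?_
  rw [dist_eq_norm, dist_eq_norm, ← emb_sub, emb_norm]

theorem emb_nonneg_iff [PartialOrder A] [StarOrderedRing A] [PartialOrder 𝓜(ℂ, A)]
    [StarOrderedRing 𝓜(ℂ, A)] (a : A) : 0 ≤ emb a ↔ 0 ≤ a := by
  have mono : ∀ x : A, 0 ≤ x → 0 ≤ emb x := fun x hx =>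
    map_nonneg (DoubleCentralizer.coeHom (𝕜 := ℂ) (A := A)) hx
  refine ⟨fun h => ?_, mono a⟩
  have hsa : IsSelfAdjoint a := by
    apply emb_inj
    rw [emb_star]; exact (IsSelfAdjoint.of_nonneg h).star_eq
  have m0 : 0 ≤ a⁻ := CFC.negPart_nonneg a
  have msa : IsSelfAdjoint (a⁻) := .of_nonneg m0
  have esa : IsSelfAdjoint (emb (a⁻)) := .of_nonneg (mono _ m0)
  have h1 := esa.conjugate_nonneg h
  have h2 : 0 ≤ emb (a⁻ * a⁻ * a⁻) := mono _ (msa.conjugate_nonneg m0)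
  have h3 : emb (a⁻) * emb a * emb (a⁻) = - emb (a⁻ * a⁻ * a⁻) := by
    rw [← emb_mul, ← emb_mul, ← emb_neg]
    congr 1
    nth_rewrite 2 [← CFC.posPart_sub_negPart a hsa]
    rw [mul_sub, CFC.negPart_mul_posPart, zero_sub, neg_mul]
  rw [h3] at h1
  have h4 : emb (a⁻ * a⁻ * a⁻) = 0 := le_antisymm (by simpa using h1) h2
  have h5 : a⁻ * a⁻ * a⁻ = 0 := emb_inj (h4.trans emb_zero.symm)
  have h6 : a⁻ * a⁻ = 0 := by
    apply (CStarRing.star_mul_self_eq_zero_iff _).1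
    rw [star_mul, msa.star_eq, ← mul_assoc, h5, zero_mul]
  have h7 : a⁻ = 0 := by
    apply (CStarRing.star_mul_self_eq_zero_iff _).1
    rw [msa.star_eq, h6]
  have := CFC.posPart_sub_negPart a hsa
  rw [h7, sub_zero] at this
  rw [← this]
  exact CFC.posPart_nonneg a

theorem idealData [PartialOrder 𝓜(ℂ, A)] [StarOrderedRing 𝓜(ℂ, A)] : IdealData (mI A) where
  closed := emb_isometry.isClosedEmbedding.isClosed_range
  mul_left := by
    rintro m _ ⟨a, rfl⟩
    exact ⟨_, (mul_emb m a).symm⟩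
  mul_right := by
    rintro m _ ⟨a, rfl⟩
    exact ⟨_, (emb_mul' m a).symm⟩
  star_mem := by
    rintro _ ⟨a, rfl⟩
    exact ⟨star a, emb_star a⟩
  au := by
    letI : PartialOrder A := CStarAlgebra.spectralOrder A
    haveI : StarOrderedRing A := CStarAlgebra.spectralOrderedRing A
    rintro _ ⟨w, rfl⟩ hw0 hw1 G hG ε hε
    change 0 ≤ emb w at hw0
    change ‖emb w‖ < 1 at hw1
    rw [emb_nonneg_iff] at hw0
    rw [emb_norm] at hw1
    have ev1 : ∀ᶠ x in CStarAlgebra.approximateUnit A, w ≤ x :=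
      (CStarAlgebra.hasBasis_approximateUnit A).eventually_iff.2 ⟨w, ⟨hw0, hw1⟩, fun x hx => hx.1⟩
    have ev2 : ∀ᶠ x in CStarAlgebra.approximateUnit A, ∀ g ∈ G, ‖g - g * emb x‖ < ε := by
      rw [Filter.eventually_all_finset]
      intro g hg
      obtain ⟨a, rfl⟩ := hG g hg
      have := ((CStarAlgebra.increasingApproximateUnit A).toIsApproximateUnit).tendsto_mul_left a
      have := Metric.tendsto_nhds.1 this ε hε
      filter_upwards [this] with x hx
      rw [dist_comm, dist_eq_norm] at hx
      change ‖emb a - emb a * emb x‖ < ε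
      rwa [← emb_mul, ← emb_sub, emb_norm]
    obtain ⟨u, ⟨hu0, hu1⟩, hu⟩ := (CStarAlgebra.hasBasis_approximateUnit A).eventually_iff.1 (ev1.and ev2)
    have := hu (x := u) ⟨le_refl u, by simpa using hu1.le⟩
    refine ⟨emb u, ⟨u, rfl⟩, ?_, by rwa [emb_norm], this.2⟩
    rw [← sub_nonneg]
    change 0 ≤ emb u - emb w
    rw [← emb_sub, emb_nonneg_iff, sub_nonneg]
    exact this.1

theorem mI_ess (m : 𝓜(ℂ, A)) (h : ∀ j ∈ mI A, m * j = 0) : m = 0 := by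
  rw [← norm_eq_zero, ← DoubleCentralizer.norm_fst, norm_eq_zero]
  refine ContinuousLinearMap.ext fun a => ?_
  have := h (emb a) ⟨a, rfl⟩
  rw [mul_emb] at this
  exact emb_inj (this.trans emb_zero.symm)

theorem mI_strict (S : ℕ → 𝓜(ℂ, A)) (hS : ∀ N, IsSelfAdjoint (S N))
    (hc : ∀ j ∈ mI A, CauchySeq fun N => S N * j) :
    ∃ E : 𝓜(ℂ, A), IsSelfAdjoint E ∧ ∀ j ∈ mI A, Tendsto (fun N => S N * j) atTop (𝓝 (E * j)) := by
  have h1 : ∀ a : A, ∃ b, Tendsto (fun N => (S N).fst a) atTop (𝓝 b) := by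
    intro a
    apply cauchySeq_tendsto_of_complete
    have := hc (emb a) ⟨a, rfl⟩
    simp only [mul_emb] at this
    rw [Metric.cauchySeq_iff] at this ⊢
    simpa only [emb_isometry.dist_eq] using this
  choose g hg using h1
  have hsnd : ∀ N (a : A), (S N).snd a = star ((S N).fst (star a)) := by
    intro N a
    rw [← DoubleCentralizer.star_snd, (hS N).star_eq]
  have hg' : ∀ a, Tendsto (fun N => (S N).snd a) atTop (𝓝 (star (g (star a)))) := by
    intro a
    simp only [hsnd]
    exact (hg (star a)).star
  let Lf : A →L[ℂ] A := continuousLinearMapOfTendsto (fun N => (S N).fst) (tendsto_pi_nhds.2 hg)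
  let Rf : A →L[ℂ] A := continuousLinearMapOfTendsto (fun N => (S N).snd)
    (f := fun a => star (g (star a))) (tendsto_pi_nhds.2 hg')
  let E : 𝓜(ℂ, A) := ⟨(Lf, Rf), fun x y => by
    change star (g (star x)) * y = x * g y
    refine tendsto_nhds_unique ((hg' x).mul_const y) ?_
    simp only [(S _).central]
    exact (hg y).const_mul x⟩
  have hE : ∀ a, E.fst a = g a := fun a => rfl
  have hE' : ∀ a, E.snd a = star (g (star a)) := fun a => rfl
  refine ⟨E, ?_, ?_⟩
  · change star E = E
    rw [← sub_eq_zero]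
    apply mI_ess
    rintro _ ⟨a, rfl⟩
    change (star E - E) * emb a = 0
    rw [sub_mul, mul_emb, mul_emb, DoubleCentralizer.star_fst, hE, hE', star_star, star_star, sub_self]
  · rintro _ ⟨a, rfl⟩
    change Tendsto (fun N => S N * emb a) atTop (𝓝 (E * emb a))
    simp only [mul_emb]
    exact (emb_isometry.continuous.tendsto _).comp (hg a)

theorem sigmaData [TopologicalSpace.SeparableSpace A] [PartialOrder 𝓜(ℂ, A)]
    [StarOrderedRing 𝓜(ℂ, A)] : SigmaData (mI A) where
  ideal := idealData
  ess := mI_ess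
  strict := mI_strict
  sig := by
    classical
    set x : ℕ → A := TopologicalSpace.denseSeq A with hx
    have h := fun k : ℕ => (idealData (A := A)).au 0 (Submodule.zero_mem _) le_rfl (by simp)
      ((Finset.range (k + 1)).image fun i => emb (x i)) (by
        intro g hg
        obtain ⟨i, _, rfl⟩ := Finset.mem_image.1 hg
        exact ⟨_, rfl⟩) (1 / ((k : ℝ) + 1)) (by positivity)
    choose e he _ he1 heG using h
    refine ⟨e, he, ?_⟩
    rintro _ ⟨a, rfl⟩
    change Tendsto (fun k => emb a * e k) atTop (𝓝 (emb a))
    rw [Metric.tendsto_atTop]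
    intro ε hε
    obtain ⟨i, hi⟩ := (TopologicalSpace.denseRange_denseSeq A).exists_dist_lt a (ε := ε / 4) (by positivity)
    rw [dist_eq_norm, ← emb_norm, emb_sub] at hi
    obtain ⟨N, hN⟩ := exists_nat_one_div_lt (half_pos hε)
    refine ⟨max N i, fun k hk => ?_⟩
    rw [dist_comm, dist_eq_norm]
    have hkN : N ≤ k := (le_max_left _ _).trans hk
    have hki : i ≤ k := (le_max_right _ _).trans hk
    have b0 := heG k (emb (x i)) (Finset.mem_image.2 ⟨i, by simp; omega, rfl⟩)
    have b1 : 1 / ((k : ℝ) + 1) ≤ 1 / ((N : ℝ) + 1) := by gcongr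
    set p := emb a - emb (x i) with hp
    have eq : emb a - emb a * e k = p - p * e k + (emb (x i) - emb (x i) * e k) := by
      rw [hp]; noncomm_ring
    rw [eq]
    have b2 : ‖p * e k‖ ≤ ‖p‖ * 1 := (norm_mul_le _ _).trans (by gcongr; exact (he1 k).le)
    have b3 := norm_add_le (p - p * e k) (emb (x i) - emb (x i) * e k)
    have b4 := norm_sub_le p (p * e k)
    change ‖p‖ < _ at hi
    linarith

theorem separable_lift [TopologicalSpace.SeparableSpace A] (X : 𝓜(ℂ, A)) (n : ℕ) (hn : 1 ≤ n)
    (hX : X ^ n ∈ mI A) (hX1 : ‖X‖ ≤ 1) :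
    ∃ a : 𝓜(ℂ, A), a - X ∈ mI A ∧ a ^ n = 0 ∧ ‖a‖ ≤ 1 := by
  letI : PartialOrder 𝓜(ℂ, A) := CStarAlgebra.spectralOrder _
  haveI : StarOrderedRing 𝓜(ℂ, A) := CStarAlgebra.spectralOrderedRing _
  exact sigma_lift sigmaData X n hn hX hX1

end
end LiftNil

namespace LiftNil
open Filter Topology Polynomial


section
variable {M : Type*} [CStarAlgebra M] [PartialOrder M] [StarOrderedRing M]

theorem pow_diff_mem {J : Submodule ℂ M} (hl : ∀ (a : M), ∀ j ∈ J, a * j ∈ J)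
    (hr : ∀ (a : M), ∀ j ∈ J, j * a ∈ J) (a X : M) (h : a - X ∈ J) (n : ℕ) :
    a ^ n - X ^ n ∈ J := by
  induction n with
  | zero => simp
  | succ k ih =>
    have e : a ^ (k + 1) - X ^ (k + 1) = (a ^ k - X ^ k) * a + X ^ k * (a - X) := by
      rw [pow_succ a, pow_succ X]; noncomm_ring
    rw [e]
    exact J.add_mem (hr _ _ ih) (hl _ _ h)

/-- the positive part of `a*a - 1` -/
noncomputable def cut (δ : ℝ) (a : M) : M := cfc (fun t : ℝ => max (t - δ) 0) (star a * a)

theorem cut_zero (δ : ℝ) (a : M) (h : ‖a‖ ^ 2 ≤ δ) : cut δ a = 0 := by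
  have hs : ∀ x ∈ spectrum ℝ (star a * a), max (x - δ) 0 = 0 := by
    intro x hx
    have := spec_norm _ hx
    rw [CStarRing.norm_star_mul_self, ← sq] at this
    have := le_abs_self x
    apply max_eq_right; linarith
  unfold cut
  rw [cfc_congr (g := fun _ => (0 : ℝ)) hs]
  simp

theorem cut_mem {J : Submodule ℂ M} (hJ : IsClosed (J : Set M)) (δ : ℝ) (a X : M)
    (hl : ∀ j ∈ J, star a * a * j ∈ J) (hr : ∀ j ∈ J, j * (star X * X) ∈ J)
    (h : star a * a - star X * X ∈ J) (hX : ‖X‖ ^ 2 ≤ δ) : cut δ a ∈ J := by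
  have := cfc_intertwine J hJ (star a * a) (star X * X) 1 (.star_mul_self a) (.star_mul_self X)
    hl hr (by simpa using h) (fun t : ℝ => max (t - δ) 0) (by fun_prop)
  have h0 := cut_zero δ X hX
  unfold cut at h0
  rw [h0, mul_one, mul_zero, sub_zero] at this
  exact this

theorem cut_sub (δ : ℝ) (hδ : 1 ≤ δ) (a : M) : ‖cut 1 a - cut δ a‖ ≤ δ - 1 := by
  unfold cut
  rw [← cfc_sub _ _ _ (by fun_prop) (by fun_prop)]
  apply norm_cfc_le (by linarith)
  intro x hx
  rw [Real.norm_eq_abs, abs_le]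
  constructor
  · have : max (x - δ) 0 ≤ max (x - 1) 0 := max_le_max (by linarith) le_rfl
    linarith
  · rw [sub_le_iff_le_add]
    apply max_le
    · linarith [le_max_left (x - δ) 0]
    · linarith [le_max_right (x - δ) 0]

theorem norm_le_one_of {K : Submodule ℂ M} (hK : IsClosed (K : Set M)) (a X : M)
    (hl : ∀ j ∈ K, star a * a * j ∈ K) (hr : ∀ j ∈ K, j * (star X * X) ∈ K)
    (h : star a * a - star X * X ∈ K) (hX : ‖X‖ ≤ 1) (ha : ∀ j ∈ K, ‖a * j‖ ≤ ‖j‖) : ‖a‖ ≤ 1 := by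
  by_contra! hlt
  have : Nontrivial M := ⟨a, 0, fun h0 => by rw [h0, norm_zero] at hlt; linarith⟩
  have hc := cut_mem hK 1 a X hl hr h (by nlinarith [norm_nonneg X])
  have h1 := ha _ hc
  have hsp := CStarAlgebra.norm_mem_spectrum_of_nonneg (star_mul_self_nonneg a)
  rw [CStarRing.norm_star_mul_self] at hsp
  set T := ‖a‖ * ‖a‖ with hT
  have hT1 : 1 < T := by nlinarith
  have h2 : ‖cut 1 a‖ ≤ T - 1 := by
    unfold cut
    apply norm_cfc_le (by linarith)
    intro x hx
    have := spec_norm _ hx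
    rw [CStarRing.norm_star_mul_self] at this
    have := le_abs_self x
    rw [Real.norm_eq_abs, abs_of_nonneg (le_max_right _ _)]
    apply max_le <;> linarith
  have csa : IsSelfAdjoint (cut 1 a) := cfc_predicate _ _
  have h3 : star (a * cut 1 a) * (a * cut 1 a)
      = cfc (fun t : ℝ => max (t - 1) 0 * t * max (t - 1) 0) (star a * a) := by
    rw [cfc_mul _ _ _ (by fun_prop) (by fun_prop), cfc_mul _ _ _ (by fun_prop) (by fun_prop),
      cfc_id' ℝ (star a * a), star_mul, csa.star_eq]
    unfold cut
    simp only [mul_assoc]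
  have h4 := norm_apply_le_norm_cfc (fun t : ℝ => max (t - 1) 0 * t * max (t - 1) 0) (star a * a) hsp
    (by fun_prop)
  rw [← h3, CStarRing.norm_star_mul_self, max_eq_left (by linarith), Real.norm_eq_abs,
    abs_of_nonneg (by have : 0 ≤ T - 1 := by linarith
                      positivity)] at h4
  have h5 : ‖a * cut 1 a‖ ≤ T - 1 := h1.trans h2
  have h6 : ‖a * cut 1 a‖ * ‖a * cut 1 a‖ ≤ (T - 1) * (T - 1) :=
    mul_le_mul h5 h5 (norm_nonneg _) (by linarith)
  nlinarith [mul_pos (sub_pos.2 hT1) (sub_pos.2 hT1)]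

theorem contr_lift {J : Submodule ℂ M} (D : IdealData J) (b : M)
    (hb : ∀ ε > 0, ∃ j ∈ J, ‖b - j‖ < 1 + ε) : ∃ X, X - b ∈ J ∧ ‖X‖ ≤ 1 := by
  have hcut : ∀ ε > 0, cut ((1 + ε) ^ 2) b ∈ J := by
    intro ε hε
    obtain ⟨j, hj, hn⟩ := hb ε hε
    refine cut_mem D.closed _ b (b - j) (fun j hj => D.mul_left _ j hj)
      (fun j hj => D.mul_right _ j hj) ?_ (by gcongr)
    have e : star b * b - star (b - j) * (b - j) = star b * j + star j * (b - j) := by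
      rw [star_sub]; noncomm_ring
    rw [e]
    exact J.add_mem (D.mul_left _ _ hj) (D.mul_right _ _ (D.star_mem _ hj))
  have hc : cut 1 b ∈ J := by
    change cut 1 b ∈ (J : Set M)
    rw [← D.closed.closure_eq, Metric.mem_closure_iff]
    intro ε hε
    have hm : 0 < min 1 (ε / 4) := by positivity
    refine ⟨_, hcut _ hm, ?_⟩
    rw [dist_eq_norm]
    refine (cut_sub _ (by nlinarith) b).trans_lt ?_
    have a1 := min_le_left 1 (ε / 4)
    have a2 := min_le_right 1 (ε / 4)
    nlinarith
  have csa : IsSelfAdjoint (cut 1 b) := cfc_predicate _ _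
  let H : ℝ → ℝ := fun u => Real.sqrt ((1 + |u|)⁻¹)
  have hH : Continuous H := by
    refine Real.continuous_sqrt.comp (Continuous.inv₀ (by fun_prop) fun u => ?_)
    positivity
  have hsa : IsSelfAdjoint (cfc H (cut 1 b)) := cfc_predicate _ _
  refine ⟨b * cfc H (cut 1 b), ?_, ?_⟩
  · have := cfc_intertwine J D.closed (cut 1 b) 0 1 csa (.zero M) (fun j hj => D.mul_left _ j hj)
      (by simp) (by simpa using hc) H hH
    rw [cfc_apply_zero] at this
    have H0 : H 0 = 1 := by simp [H]
    rw [H0, map_one, mul_one, mul_one] at this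
    have := D.mul_left b _ this
    rwa [mul_sub, mul_one] at this
  · let G : ℝ → ℝ := fun t => H (max (t - 1) 0)
    have hG : Continuous G := hH.comp (by fun_prop)
    have e : cfc H (cut 1 b) = cfc G (star b * b) := by
      unfold cut
      exact (cfc_comp H (fun t : ℝ => max (t - 1) 0) (star b * b) (.star_mul_self b)
        hH.continuousOn (by fun_prop)).symm
    have h3 : star (b * cfc H (cut 1 b)) * (b * cfc H (cut 1 b))
        = cfc (fun t : ℝ => G t * t * G t) (star b * b) := by
      rw [cfc_mul _ _ _ (by fun_prop) (by fun_prop), cfc_mul _ _ _ (by fun_prop) (by fun_prop),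
        cfc_id' ℝ (star b * b), star_mul, hsa.star_eq, e]
      simp only [mul_assoc]
    have h4 : ‖b * cfc H (cut 1 b)‖ * ‖b * cfc H (cut 1 b)‖ ≤ 1 := by
      rw [← CStarRing.norm_star_mul_self, h3]
      apply norm_cfc_le zero_le_one
      intro x hx
      have hx0 : 0 ≤ x := spectrum_nonneg_of_nonneg (star_mul_self_nonneg b) hx
      have hm : 0 ≤ max (x - 1) 0 := le_max_right _ _
      have hm' : x - 1 ≤ max (x - 1) 0 := le_max_left _ _
      have e2 : G x * x * G x = x * (1 + max (x - 1) 0)⁻¹ := by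
        have : G x * G x = (1 + max (x - 1) 0)⁻¹ := by
          simp only [G, H]
          rw [abs_of_nonneg hm, Real.mul_self_sqrt (by positivity)]
        rw [← this]; ring
      rw [e2, Real.norm_eq_abs, abs_of_nonneg (by positivity), mul_inv_le_iff₀ (by positivity)]
      linarith
    nlinarith [norm_nonneg (b * cfc H (cut 1 b))]

theorem elemental_separable (X : M) :
    TopologicalSpace.IsSeparable (StarAlgebra.elemental ℂ X : Set M) := by
  change TopologicalSpace.IsSeparable (closure (StarAlgebra.adjoin ℂ ({X} : Set M) : Set M))
  apply TopologicalSpace.IsSeparable.closure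
  have h1 : ((StarAlgebra.adjoin ℂ ({X} : Set M)) : Set M)
      = (Submodule.span ℂ (Submonoid.closure ({X} ∪ star {X}) : Set M) : Set M) := by
    rw [← Algebra.adjoin_eq_span]
    rfl
  rw [h1]
  apply TopologicalSpace.IsSeparable.span
  apply Set.Countable.isSeparable
  rw [Submonoid.closure_eq_mrange]
  have : Countable (({X} ∪ star {X} : Set M)) :=
    Set.Countable.to_subtype (by rw [Set.star_singleton]; simp)
  exact Set.countable_range _

end
end LiftNil

namespace LiftNil
open Filter Topology Polynomial


section
variable {M : Type*} [CStarAlgebra M] [PartialOrder M] [StarOrderedRing M]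

/-- the separable subalgebra of the ideal -/
noncomputable def sepIdeal {J : Submodule ℂ M} (D : IdealData J) (X : M) :
    NonUnitalStarSubalgebra ℂ M where
  carrier := {x | x ∈ StarAlgebra.elemental ℂ X ∧ x ∈ J}
  add_mem' := fun ha hb => ⟨add_mem ha.1 hb.1, J.add_mem ha.2 hb.2⟩
  zero_mem' := ⟨zero_mem _, J.zero_mem⟩
  mul_mem' := fun ha hb => ⟨mul_mem ha.1 hb.1, D.mul_left _ _ hb.2⟩
  smul_mem' := fun c _ ha => ⟨SMulMemClass.smul_mem c ha.1, J.smul_mem c ha.2⟩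
  star_mem' := fun ha => ⟨star_mem ha.1, D.star_mem _ ha.2⟩

theorem mem_sepIdeal {J : Submodule ℂ M} (D : IdealData J) (X x : M) :
    x ∈ sepIdeal D X ↔ x ∈ StarAlgebra.elemental ℂ X ∧ x ∈ J := Iff.rfl

theorem sepIdeal_closed {J : Submodule ℂ M} (D : IdealData J) (X : M) :
    IsClosed (sepIdeal D X : Set M) :=
  (StarAlgebra.elemental.isClosed ℂ X).inter D.closed

theorem sepIdeal_sep {J : Submodule ℂ M} (D : IdealData J) (X : M) :
    TopologicalSpace.SeparableSpace (sepIdeal D X) :=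
  ((elemental_separable X).mono (fun _ hx => hx.1)).separableSpace

/-- multiplication by an element that preserves the subalgebra, as a multiplier -/
noncomputable def theta (K : NonUnitalStarSubalgebra ℂ M) [IsClosed (K : Set M)] (X : M)
    (hl : ∀ j ∈ K, X * j ∈ K) (hr : ∀ j ∈ K, j * X ∈ K) : 𝓜(ℂ, K) where
  toProd :=
    (LinearMap.mkContinuous
      { toFun := fun j => (⟨X * j, hl _ j.2⟩ : K)
        map_add' := fun a b => Subtype.ext (mul_add _ _ _)
        map_smul' := fun c a => Subtype.ext (mul_smul_comm _ _ _) } ‖X‖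
        (fun j => norm_mul_le X (j : M)),
     LinearMap.mkContinuous
      { toFun := fun j => (⟨j * X, hr _ j.2⟩ : K)
        map_add' := fun a b => Subtype.ext (add_mul _ _ _)
        map_smul' := fun c a => Subtype.ext (smul_mul_assoc _ _ _) } ‖X‖
        (fun j => (norm_mul_le (j : M) X).trans_eq (mul_comm _ _)))
  central := fun x y => Subtype.ext (mul_assoc (x : M) X (y : M))

theorem theta_norm (K : NonUnitalStarSubalgebra ℂ M) [IsClosed (K : Set M)] (X : M)
    (hl : ∀ j ∈ K, X * j ∈ K) (hr : ∀ j ∈ K, j * X ∈ K) : ‖theta K X hl hr‖ ≤ ‖X‖ := by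
  rw [← DoubleCentralizer.norm_fst]
  exact ContinuousLinearMap.opNorm_le_bound _ (norm_nonneg _) fun j => norm_mul_le X (j : M)

/-- the multiplier `P` acts on `K` as left multiplication by `p` -/
def Acts (K : NonUnitalStarSubalgebra ℂ M) [IsClosed (K : Set M)] (P : 𝓜(ℂ, K)) (p : M) : Prop :=
  ∀ j : K, ∃ k : K, P * emb j = emb k ∧ (k : M) = p * j

theorem Acts.pow {K : NonUnitalStarSubalgebra ℂ M} [IsClosed (K : Set M)] {P : 𝓜(ℂ, K)} {p : M}
    (h : Acts K P p) (n : ℕ) : Acts K (P ^ n) (p ^ n) := by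
  induction n with
  | zero => exact fun j => ⟨j, by simp, by simp⟩
  | succ m ih =>
    intro j
    obtain ⟨k, hk, hk'⟩ := h j
    obtain ⟨l, hl, hl'⟩ := ih k
    refine ⟨l, ?_, ?_⟩
    · rw [pow_succ, mul_assoc, hk, hl]
    · rw [hl', hk', pow_succ, mul_assoc]

theorem Acts.add_emb {K : NonUnitalStarSubalgebra ℂ M} [IsClosed (K : Set M)] {P : 𝓜(ℂ, K)} {p : M}
    (h : Acts K P p) (i : K) : Acts K (P + emb i) (p + i) := by
  intro j
  obtain ⟨k, hk, hk'⟩ := h j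
  refine ⟨k + i * j, ?_, ?_⟩
  · rw [add_mul, hk, ← emb_mul]
    exact (map_add (DoubleCentralizer.coeHom (𝕜 := ℂ) (A := K)) _ _).symm
  · rw [add_mul, ← hk']; rfl

theorem theta_acts (K : NonUnitalStarSubalgebra ℂ M) [IsClosed (K : Set M)] (X : M)
    (hl : ∀ j ∈ K, X * j ∈ K) (hr : ∀ j ∈ K, j * X ∈ K) : Acts K (theta K X hl hr) X := by
  intro j
  exact ⟨⟨X * j, hl _ j.2⟩, mul_emb _ _, rfl⟩

theorem ideal_lift {J : Submodule ℂ M} (D : IdealData J) (X : M) (n : ℕ) (hn : 1 ≤ n)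
    (hX : X ^ n ∈ J) (hX1 : ‖X‖ ≤ 1) : ∃ a, a - X ∈ J ∧ a ^ n = 0 ∧ ‖a‖ ≤ 1 := by
  have hXe : X ∈ StarAlgebra.elemental ℂ X := StarAlgebra.elemental.self_mem ℂ X
  have hcl : IsClosed (sepIdeal D X : Set M) := sepIdeal_closed D X
  have hsep : TopologicalSpace.SeparableSpace (sepIdeal D X) := sepIdeal_sep D X
  have eL : ∀ e ∈ StarAlgebra.elemental ℂ X, ∀ j ∈ sepIdeal D X, e * j ∈ sepIdeal D X :=
    fun e he j hj => ⟨mul_mem he hj.1, D.mul_left _ _ hj.2⟩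
  have eR : ∀ e ∈ StarAlgebra.elemental ℂ X, ∀ j ∈ sepIdeal D X, j * e ∈ sepIdeal D X :=
    fun e he j hj => ⟨mul_mem hj.1 he, D.mul_right _ _ hj.2⟩
  have hact := theta_acts (sepIdeal D X) X (eL X hXe) (eR X hXe)
  have hnorm := theta_norm (sepIdeal D X) X (eL X hXe) (eR X hXe)
  set Θ := theta (sepIdeal D X) X (eL X hXe) (eR X hXe) with hΘ
  have hpow : Θ ^ n ∈ mI (sepIdeal D X) := by
    refine ⟨⟨X ^ n, pow_mem hXe n, hX⟩, ?_⟩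
    symm
    rw [← sub_eq_zero]
    apply mI_ess
    rintro _ ⟨j, rfl⟩
    obtain ⟨k, hk, hk'⟩ := hact.pow n j
    rw [sub_mul, sub_eq_zero]
    refine hk.trans ?_
    have : k = ⟨X ^ n, pow_mem hXe n, hX⟩ * j := Subtype.ext hk'
    rw [this]
    exact emb_mul _ _
  obtain ⟨at', ⟨i, hi⟩, hat, hat1⟩ := separable_lift Θ n hn hpow (hnorm.trans hX1)
  change emb i = at' - Θ at hi
  have hat2 : at' = Θ + emb i := by rw [hi]; abel
  subst hat2
  have hA := hact.add_emb i
  have hie := i.2.1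
  have hiJ := i.2.2
  have hae : X + (i : M) ∈ StarAlgebra.elemental ℂ X := add_mem hXe hie
  have haX : X + (i : M) - X = i := by abel
  have haJ : X + (i : M) - X ∈ J := by rw [haX]; exact hiJ
  refine ⟨X + i, haJ, ?_, ?_⟩
  · set q := (X + (i : M)) ^ n with hq
    have q1 : q ∈ J := by
      have := J.add_mem (pow_diff_mem D.mul_left D.mul_right _ _ haJ n) hX
      rwa [sub_add_cancel] at this
    have q2 : star q ∈ sepIdeal D X := star_mem (show q ∈ sepIdeal D X from ⟨pow_mem hae n, q1⟩)
    obtain ⟨k, hk, hk'⟩ := hA.pow n ⟨star q, q2⟩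
    rw [hat, zero_mul] at hk
    have k0 : k = 0 := emb_inj (hk.symm.trans emb_zero.symm)
    rw [k0] at hk'
    exact (CStarRing.mul_star_self_eq_zero_iff _).1 hk'.symm
  · refine norm_le_one_of (K := (sepIdeal D X).toSubmodule) hcl _ X
      (fun j hj => eL _ (mul_mem (star_mem hae) hae) j hj)
      (fun j hj => eR _ (mul_mem (star_mem hXe) hXe) j hj) ?_ hX1 ?_
    · have e : star (X + (i : M)) * (X + i) - star X * X = star (X + (i : M)) * i + star (i : M) * X := by
        rw [star_add]; noncomm_ring
      rw [e]
      exact add_mem (eL _ (star_mem hae) _ i.2) (eR _ hXe _ (star_mem i.2))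
    · intro j hj
      obtain ⟨k, hk, hk'⟩ := hA ⟨j, hj⟩
      have := norm_mul_le (Θ + emb i) (emb (⟨j, hj⟩ : sepIdeal D X))
      rw [hk, emb_norm, emb_norm] at this
      rw [← hk']
      refine this.trans ?_
      exact mul_le_of_le_one_left (norm_nonneg _) hat1

end
end LiftNil

/-- **Lifting of nilpotent contractions from corona algebras.**  Let `I` be a
C*-algebra, `M(I) = 𝓜(ℂ, I)` its multiplier algebra, and `n ≥ 1`.  If `b` in the
corona algebra `M(I)/I` satisfies `b ^ n = 0` and `‖b‖ ≤ 1`, then `b` lifts to some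
`a ∈ M(I)` with `a ^ n = 0` and `‖a‖ ≤ 1`.  Here `I` is identified with its canonical
image in `𝓜(ℂ, I)`, the quotient element is encoded by a representative
`b : 𝓜(ℂ, I)`: the condition `b ^ n = 0` in `M(I)/I` reads `b ^ n ∈ I`, the quotient
norm of `b + I` is `infDist b I`, and `a + I = b + I` reads `a - b ∈ I`. -/
theorem lift_nilpotent_contraction_multiplier
    {I : Type*} [NonUnitalCStarAlgebra I] [StarModule ℂ I]
    (n : ℕ) (hn : 1 ≤ n) (b : 𝓜(ℂ, I))
    (hnil : b ^ n ∈ Set.range (DoubleCentralizer.coeHom (𝕜 := ℂ) (A := I)))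
    (hnorm : Metric.infDist b
      (Set.range (DoubleCentralizer.coeHom (𝕜 := ℂ) (A := I))) ≤ 1) :
    ∃ a : 𝓜(ℂ, I), a - b ∈ Set.range (DoubleCentralizer.coeHom (𝕜 := ℂ) (A := I)) ∧
      a ^ n = 0 ∧ ‖a‖ ≤ 1 := by
  let : PartialOrder 𝓜(ℂ, I) := CStarAlgebra.spectralOrder _
  have : StarOrderedRing 𝓜(ℂ, I) := CStarAlgebra.spectralOrderedRing _
  have D : LiftNil.IdealData (LiftNil.mI I) := LiftNil.idealData
  have hb : ∀ ε > 0, ∃ j ∈ LiftNil.mI I, ‖b - j‖ < 1 + ε := by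
    intro ε hε
    have h1 : Metric.infDist b (Set.range (DoubleCentralizer.coeHom (𝕜 := ℂ) (A := I))) < 1 + ε := by
      linarith
    obtain ⟨j, hj, hd⟩ := (Metric.infDist_lt_iff (Set.range_nonempty _)).1 h1
    exact ⟨j, hj, by rwa [← dist_eq_norm]⟩
  obtain ⟨X, hXb, hX1⟩ := LiftNil.contr_lift D b hb
  have hXn : X ^ n ∈ LiftNil.mI I := by
    have := (LiftNil.mI I).add_mem
      (LiftNil.pow_diff_mem D.mul_left D.mul_right _ _ hXb n) hnil
    rwa [sub_add_cancel] at this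
  obtain ⟨a, haX, ha, ha1⟩ := LiftNil.ideal_lift D X n hn hXn hX1
  refine ⟨a, ?_, ha, ha1⟩
  have := (LiftNil.mI I).add_mem haX hXb
  rw [sub_add_sub_cancel] at this
  exact this
end
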